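/- arXiv:1805.09356 — 3 statements merged into one kernel-verified Lean document; each statement's English description precedes it below -/
import Mathlib

section
/- Let R be a complete regular local ring and Λ a regular R-algebra (Λ finitely generated free as R-module, Z(Λ) = R, gl.dim Λ = dim R). Then for any finitely generated Λ-module M, depth_R M + pd_Λ M = dim R. -/
/-!
A regular system of parameters of `R` is a regular sequence, and stays one on the flat module `Λ`;
let `d` be its length, so that `Λ` has global dimension at most `d`.

If `x ∈ 𝔪` is `M`-regular, the long exact sequence of `0 → M → M → M / xM → 0` and Nakayama's lemma
show that killing `x` raises the projective dimension. As it never exceeds `d`, an `M`-regular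
sequence has length at most `d - pd M`.

Conversely, `Ext_R^i(R / 𝔪, P) = 0` for `i < d` and every finitely generated projective `Λ`-module
`P`, a direct summand of a free one. Dimension shifting over `Λ` gives `Ext_R^i(R / 𝔪, M) = 0` for
`i < d - pd M`, and Rees' theorem turns this into an `M`-regular sequence of length `d - pd M`.
-/

noncomputable section
open CategoryTheory IsLocalRing

/-- The depth of a module over a local ring: the supremum of lengths of `M`-regular
sequences contained in the maximal ideal. -/
def rDepth (R : Type) [CommRing R] [IsLocalRing R]
    (M : Type) [AddCommGroup M] [Module R M] : ℕ :=
  sSup {n : ℕ | ∃ rs : List R, rs.length = n ∧ (∀ r ∈ rs, r ∈ maximalIdeal R) ∧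
    RingTheory.Sequence.IsRegular M rs}

/-- The depth (over `R`) of a module over an `R`-algebra `Λ`, via restriction of
scalars along `R → Λ`. -/
def rDepthOver (R : Type) [CommRing R] [IsLocalRing R] (Λ : Type) [Ring Λ] [Algebra R Λ]
    (M : ModuleCat Λ) : ℕ :=
  letI : Module R M := Module.compHom M (algebraMap R Λ)
  rDepth R M

/-- `M` has projective dimension at most `n` over `Λ`: all Ext-groups `Ext^i(M, N)`
vanish for `i > n`. -/
def pdLE (Λ : Type) [Ring Λ] (M : ModuleCat Λ) (n : ℕ) : Prop :=
  ∀ (N : ModuleCat Λ) (i : ℕ), n < i →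
    Subsingleton (((Ext ℤ (ModuleCat Λ) i).obj (Opposite.op M)).obj N)

/-- The projective dimension of `M` over `Λ` (as a natural number; `0` if infinite). -/
def projDim (Λ : Type) [Ring Λ] (M : ModuleCat Λ) : ℕ :=
  sInf {n : ℕ | pdLE Λ M n}

section RegularLocalRing

open RingTheory.Sequence
open scoped Pointwise

variable {R : Type*} [CommRing R] [IsNoetherianRing R]

theorem ringKrullDim_quotient_eq_coheight {R : Type*} [CommRing R] (p : PrimeSpectrum R) :
    ringKrullDim (R ⧸ p.asIdeal) = Order.coheight p := by
  rw [ringKrullDim_quotient, Order.coheight_eq_krullDim_Ici]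
  rfl

-- Rearrange the chain so that `x` lies in its second member, then replace its first member by `p`.
theorem length_le_coheight_of_isMin_of_asIdeal_eq_span_singleton {p : PrimeSpectrum R} {x : R}
    (hpx : p.asIdeal = Ideal.span {x}) (hp : IsMin p) (s : LTSeries (PrimeSpectrum R))
    (hx : x ∈ s.last.asIdeal) : s.length ≤ Order.coheight p := by
  obtain ⟨q, hxq, hlen, -, -⟩ := PrimeSpectrum.exist_ltSeries_mem_one_of_mem_last s hx
  rw [hlen]
  rcases Nat.eq_zero_or_pos q.length with h0 | hpos
  · simp [h0]
  have h01 : q 0 < q 1 := q.strictMono (by simp [Fin.lt_def, Nat.mod_eq_of_lt, hpos])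
  have hle : p ≤ q 1 := by
    rw [← PrimeSpectrum.asIdeal_le_asIdeal, hpx, Ideal.span_singleton_le_iff_mem]
    exact hxq
  have hlt : p < q 1 := hle.lt_of_ne fun h ↦ hp.not_lt (h ▸ h01)
  have hrev : ((1 : Fin (q.length + 1)).rev : ℕ) + 1 = q.length := by
    simp [Fin.val_rev, Nat.mod_eq_of_lt, hpos]
    omega
  calc (q.length : ℕ∞) = ((1 : Fin (q.length + 1)).rev : ℕ) + 1 := by exact_mod_cast hrev.symm
    _ ≤ Order.coheight (q 1) + 1 := by gcongr; exact Order.rev_index_le_coheight q 1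
    _ ≤ Order.coheight p := Order.coheight_add_one_le hlt

variable [IsLocalRing R]

theorem ringKrullDim_le_quotient_of_span_singleton_mem_minimalPrimes {x : R}
    (hx : Ideal.span {x} ∈ minimalPrimes R) :
    ringKrullDim R ≤ ringKrullDim (R ⧸ Ideal.span {x}) := by
  let p : PrimeSpectrum R := ⟨Ideal.span {x}, hx.1.1⟩
  have hxm : x ∈ maximalIdeal R :=
    le_maximalIdeal hx.1.1.ne_top (Ideal.mem_span_singleton_self x)
  rw [show Ideal.span {x} = p.asIdeal from rfl, ringKrullDim_quotient_eq_coheight, ringKrullDim,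
    ← Order.height_top_eq_krullDim, WithBot.coe_le_coe]
  refine Order.height_le fun s hs ↦ ?_
  exact length_le_coheight_of_isMin_of_asIdeal_eq_span_singleton rfl
    (PrimeSpectrum.isMin_iff.mpr hx) s (hs ▸ hxm)

theorem isDomain_of_isPrime_span_singleton {x : R} (hprime : (Ideal.span {x}).IsPrime)
    (hmin : Ideal.span {x} ∉ minimalPrimes R) : IsDomain R := by
  obtain ⟨q, hq, hqx⟩ := Ideal.exists_minimalPrimes_le (I := ⊥) (J := Ideal.span {x}) bot_le
  have hqp : q.IsPrime := hq.1.1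
  have hxq : x ∉ q := fun h ↦
    hmin (le_antisymm hqx ((Ideal.span_singleton_le_iff_mem q).mpr h) ▸ hq)
  have hqm : q ≤ maximalIdeal R • q := fun y hy ↦ by
    obtain ⟨z, rfl⟩ := Ideal.mem_span_singleton'.mp (hqx hy)
    have hz : z ∈ q := (hqp.mem_or_mem hy).resolve_right hxq
    rw [mul_comm]
    exact Submodule.smul_mem_smul
      (le_maximalIdeal hprime.ne_top (Ideal.mem_span_singleton_self x)) hz
  have hq_bot : q = ⊥ := Submodule.eq_bot_of_le_smul_of_le_jacobson_bot (maximalIdeal R) q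
    (IsNoetherian.noetherian q) hqm (maximalIdeal_le_jacobson _)
  have : (⊥ : Ideal R).IsPrime := hq_bot ▸ hqp
  exact IsDomain.of_bot_isPrime R

theorem ringKrullDim_le_length_of_ofList_eq_maximalIdeal {rs : List R}
    (hrs : Ideal.ofList rs = maximalIdeal R) : ringKrullDim R ≤ rs.length := by
  classical
  rw [← maximalIdeal_height_eq_ringKrullDim]
  have hspan : Ideal.span (rs.toFinset : Set R) = maximalIdeal R := by
    simpa [Ideal.ofList] using hrs
  have hmin : maximalIdeal R ∈ (Ideal.span (rs.toFinset : Set R)).minimalPrimes := by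
    rw [hspan, Ideal.minimalPrimes_eq_subsingleton_self]
    rfl
  exact_mod_cast (Ideal.height_le_card_of_mem_minimalPrimes_span_finset hmin).trans
    (Nat.cast_le.mpr rs.toFinset_card_le)

theorem isWeaklyRegular_self_cons_iff {R : Type*} [CommRing R] (x : R) (rs : List R) :
    IsWeaklyRegular R (x :: rs) ↔ IsSMulRegular R x ∧
      IsWeaklyRegular (R ⧸ Ideal.span {x}) (rs.map (Ideal.Quotient.mk (Ideal.span {x}))) := by
  have hspan : x • (⊤ : Submodule R R) = Ideal.span {x} := by
    rw [← Submodule.ideal_span_singleton_smul, smul_eq_mul, Ideal.mul_top]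
  rw [isWeaklyRegular_cons_iff, ← Ideal.Quotient.algebraMap_eq, isWeaklyRegular_map_algebraMap_iff,
    (Submodule.quotEquivOfEq _ _ hspan).isWeaklyRegular_congr]

theorem ofList_map_quotientMk_eq_maximalIdeal {R : Type*} [CommRing R] [IsLocalRing R] {x : R}
    [IsLocalRing (R ⧸ Ideal.span {x})] {rs : List R}
    (hrs : Ideal.ofList (x :: rs) = maximalIdeal R) :
    Ideal.ofList (rs.map (Ideal.Quotient.mk (Ideal.span {x}))) =
      maximalIdeal (R ⧸ Ideal.span {x}) := by
  rw [← map_maximalIdeal_of_surjective _ Ideal.Quotient.mk_surjective, ← hrs, Ideal.map_ofList,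
    List.map_cons, Ideal.ofList_cons,
    Ideal.Quotient.eq_zero_iff_mem.mpr (Ideal.mem_span_singleton_self x),
    Ideal.span_singleton_zero, bot_sup_eq]

-- Killing the first generator lowers both dimension and embedding dimension by one, so by
-- induction `R ⧸ (x)` is a domain; for dimension reasons the prime `(x)` is not minimal.
theorem isDomain_and_isWeaklyRegular_of_ofList_eq_maximalIdeal (rs : List R)
    (hrs : Ideal.ofList rs = maximalIdeal R) (hdim : rs.length ≤ ringKrullDim R) :
    IsDomain R ∧ IsWeaklyRegular R rs := by
  induction hn : rs.length generalizing R rs with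
  | zero =>
    obtain rfl := List.length_eq_zero_iff.mp hn
    have : (⊥ : Ideal R).IsPrime := by
      rw [← Ideal.ofList_nil, hrs]
      infer_instance
    exact ⟨IsDomain.of_bot_isPrime R, .nil R R⟩
  | succ n ih =>
    obtain ⟨x, rs, rfl⟩ := List.exists_cons_of_length_eq_add_one hn
    let π := Ideal.Quotient.mk (Ideal.span {x})
    have hx : x ∈ maximalIdeal R := hrs ▸ Ideal.subset_span (by simp)
    have : Nontrivial (R ⧸ Ideal.span {x}) :=
      Ideal.Quotient.nontrivial_iff.mpr fun h ↦ hx (Ideal.span_singleton_eq_top.mp h)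
    have : IsLocalRing (R ⧸ Ideal.span {x}) := .of_surjective' π Ideal.Quotient.mk_surjective
    have hmap : Ideal.ofList (rs.map π) = maximalIdeal (R ⧸ Ideal.span {x}) :=
      ofList_map_quotientMk_eq_maximalIdeal hrs
    have hdim' : (rs.map π).length ≤ ringKrullDim (R ⧸ Ideal.span {x}) := by
      rw [← ENat.WithBot.add_le_add_one_right_iff]
      calc _ = ((x :: rs).length : WithBot ℕ∞) := by simp
        _ ≤ ringKrullDim R := hdim
        _ ≤ _ := maximalIdeal_height_eq_ringKrullDim (R := R) ▸
          Ideal.height_le_ringKrullDim_quotient_add_one hx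
    obtain ⟨hdom, hreg⟩ := ih (rs.map π) hmap hdim' (by simpa using hn)
    have hmin : Ideal.span {x} ∉ minimalPrimes R := fun h ↦ by
      have := hdim.trans ((ringKrullDim_le_quotient_of_span_singleton_mem_minimalPrimes h).trans
        (ringKrullDim_le_length_of_ofList_eq_maximalIdeal hmap))
      simp only [List.length_cons, List.length_map, Nat.cast_le] at this
      omega
    have hprime : (Ideal.span {x}).IsPrime := (Ideal.Quotient.isDomain_iff_prime _).mp hdom
    have hR : IsDomain R := isDomain_of_isPrime_span_singleton hprime hmin
    have hx0 : x ≠ 0 := by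
      rintro rfl
      exact hmin (by simp [IsDomain.minimalPrimes_eq_singleton_bot])
    exact ⟨hR, (isWeaklyRegular_self_cons_iff x rs).mpr ⟨.of_ne_zero hx0, hreg⟩⟩

end RegularLocalRing

section ProjectiveDimension

variable {C : Type*} [Category* C] [Abelian C] {X : C}

theorem subsingleton_ext_iff_of_projectiveResolution [HasExt C] (P : ProjectiveResolution X)
    (Y : C) (n : ℕ) :
    Subsingleton (Abelian.Ext X Y (n + 1)) ↔ ∀ f : P.complex.X (n + 1) ⟶ Y,
      P.complex.d (n + 2) (n + 1) ≫ f = 0 → ∃ g, P.complex.d (n + 1) n ≫ g = f := by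
  refine ⟨fun h f hf ↦ ?_, fun h ↦ subsingleton_of_forall_eq 0 fun α ↦ ?_⟩
  · exact (P.extMk_eq_zero_iff f (n + 2) rfl hf n rfl).mp (Subsingleton.elim _ _)
  · obtain ⟨f, hf, rfl⟩ := P.extMk_surjective α (n + 2) rfl
    exact (P.extMk_eq_zero_iff f (n + 2) rfl hf n rfl).mpr (h f hf)

theorem subsingleton_linearExt_iff_of_projectiveResolution (k : Type*) [Ring k] [Linear k C]
    [EnoughProjectives C] (P : ProjectiveResolution X) (Y : C) (n : ℕ) :
    Subsingleton (((Ext k C (n + 1)).obj (Opposite.op X)).obj Y) ↔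
      ∀ f : P.complex.X (n + 1) ⟶ Y,
        P.complex.d (n + 2) (n + 1) ≫ f = 0 → ∃ g, P.complex.d (n + 1) n ≫ g = f := by
  rw [(P.isoExt (R := k) (n + 1) Y).toLinearEquiv.toEquiv.subsingleton_congr,
    ← ModuleCat.isZero_iff_subsingleton, ← HomologicalComplex.exactAt_iff_isZero_homology,
    HomologicalComplex.exactAt_iff' _ n (n + 1) (n + 2) (by simp) (by simp),
    ShortComplex.moduleCat_exact_iff]
  rfl

theorem subsingleton_linearExt_iff (k : Type*) [Ring k] [Linear k C] [EnoughProjectives C]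
    [HasExt C] (X Y : C) (n : ℕ) :
    Subsingleton (((Ext k C (n + 1)).obj (Opposite.op X)).obj Y) ↔
      Subsingleton (Abelian.Ext X Y (n + 1)) := by
  have P := projectiveResolution X
  rw [subsingleton_linearExt_iff_of_projectiveResolution k P,
    subsingleton_ext_iff_of_projectiveResolution P]

theorem exists_projectiveDimension_eq_natCast (hX : ¬ Limits.IsZero X) {n : ℕ}
    (hn : projectiveDimension X ≤ n) : ∃ p : ℕ, projectiveDimension X = p := by
  obtain ⟨p, hp⟩ := WithBot.ne_bot_iff_exists.mp (mt (projectiveDimension_eq_bot_iff X).mp hX)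
  have hp_top : p ≠ ⊤ := by
    rintro rfl
    rw [← hp] at hn
    exact absurd (WithBot.coe_le_coe.mp hn) (by simp)
  obtain ⟨p, rfl⟩ := ENat.ne_top_iff_exists.mp hp_top
  exact ⟨p, hp.symm⟩

theorem pdLE_iff_projectiveDimension_le {Λ : Type} [Ring Λ] (M : ModuleCat Λ) (n : ℕ) :
    pdLE Λ M n ↔ projectiveDimension M ≤ n := by
  rw [projectiveDimension_le_iff, HasProjectiveDimensionLE, hasProjectiveDimensionLT_iff]
  constructor
  · intro h i hi N e
    obtain ⟨i, rfl⟩ := Nat.exists_eq_add_one_of_ne_zero (by omega : i ≠ 0)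
    have := (subsingleton_linearExt_iff ℤ M N i).mp (h N _ hi)
    exact Subsingleton.elim _ _
  · intro h N i hi
    obtain ⟨i, rfl⟩ := Nat.exists_eq_add_one_of_ne_zero (by omega : i ≠ 0)
    exact (subsingleton_linearExt_iff ℤ M N i).mpr (subsingleton_of_forall_eq 0 fun e ↦ h _ hi e)

theorem projDim_eq_of_projectiveDimension_eq {Λ : Type} [Ring Λ] {M : ModuleCat Λ} {n : ℕ}
    (h : projectiveDimension M = n) : projDim Λ M = n := by
  simp only [projDim, pdLE_iff_projectiveDimension_le, h, Nat.cast_le]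
  exact csInf_Ici

end ProjectiveDimension

section UpperBound

open scoped Pointwise ModuleCat.Algebra

universe u

theorem subsingleton_ext_X₁_of_shortExact {C : Type*} [Category* C] [Abelian C] [HasExt C]
    {S : ShortComplex C} (hS : S.ShortExact) [Projective S.X₂] {Y : C} {n : ℕ}
    (h : Subsingleton (Abelian.Ext S.X₃ Y (n + 2))) :
    Subsingleton (Abelian.Ext S.X₁ Y (n + 1)) := by
  refine subsingleton_of_forall_eq 0 fun e ↦ ?_
  obtain ⟨e', rfl⟩ :=
    Abelian.Ext.contravariant_sequence_exact₁ hS Y e (add_comm _ _) (Subsingleton.elim _ _)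
  have := Abelian.Ext.subsingleton_of_projective S.X₂ Y n
  rw [Subsingleton.elim e' 0, Abelian.Ext.comp_zero]

theorem exists_shortExact_projective_finite {Λ : Type u} [Ring Λ] [IsNoetherianRing Λ]
    (M : ModuleCat.{u} Λ) [Module.Finite Λ M] :
    ∃ S : ShortComplex (ModuleCat.{u} Λ), S.ShortExact ∧ S.X₃ = M ∧ Projective S.X₂ ∧
      Module.Finite Λ S.X₁ ∧ Module.Finite Λ S.X₂ := by
  obtain ⟨_, f, hf⟩ := Module.Finite.exists_fin' Λ M
  exact ⟨f.shortComplexKer, LinearMap.shortExact_shortComplexKer hf, rfl,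
    inferInstance, inferInstance, inferInstance⟩

theorem hasProjectiveDimensionLT_of_forall_finite {Λ : Type u} [Ring Λ]
    [IsNoetherianRing Λ] (M : ModuleCat.{u} Λ) [Module.Finite Λ M] (n : ℕ)
    (h : ∀ N : ModuleCat.{u} Λ, Module.Finite Λ N → Subsingleton (Abelian.Ext M N n)) :
    HasProjectiveDimensionLT M n := by
  induction n generalizing M with
  | zero =>
    have : Subsingleton (M ⟶ M) := Abelian.Ext.homEquiv₀.subsingleton_congr.mp (h M ‹_›)
    exact ((Limits.IsZero.iff_id_eq_zero M).mpr
      (Subsingleton.eq_zero (𝟙 M))).hasProjectiveDimensionLT_zero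
  | succ n ih =>
    obtain ⟨S, hS, rfl, _, _, _⟩ := exists_shortExact_projective_finite M
    match n with
    | 0 =>
      rw [zero_add, ← projective_iff_hasProjectiveDimensionLT_one]
      have := h S.X₁ inferInstance
      obtain ⟨s, hs⟩ := Abelian.Ext.covariant_sequence_exact₃ S.X₃ hS (Abelian.Ext.mk₀ (𝟙 S.X₃))
        (zero_add 1) (Subsingleton.elim _ _)
      obtain ⟨s, rfl⟩ := (Abelian.Ext.mk₀_bijective _ _).2 s
      rw [Abelian.Ext.mk₀_comp_mk₀, (Abelian.Ext.mk₀_bijective _ _).1.eq_iff] at hs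
      exact (Retract.mk s S.g hs).projective
    | n + 1 =>
      rw [hS.hasProjectiveDimensionLT_X₃_iff n inferInstance]
      exact ih _ fun N hN ↦ subsingleton_ext_X₁_of_shortExact hS (h N hN)

variable {R : Type*} {Λ : Type u} [CommRing R] [Ring Λ] [Algebra R Λ]

theorem module_finite_ext [IsNoetherianRing R] [Module.Finite R Λ] (M N : ModuleCat.{u} Λ)
    [Module.Finite Λ M] [Module.Finite Λ N] (n : ℕ) : Module.Finite R (Abelian.Ext M N n) := by
  have : IsNoetherianRing Λ := isNoetherian_of_tower R inferInstance
  induction n generalizing M with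
  | zero =>
    have : Module.Finite R M := .trans Λ M
    have : Module.Finite R N := .trans Λ N
    have : Module.Finite R (M →ₗ[Λ] N) :=
      .of_injective (LinearMap.restrictScalarsₗ R Λ M N R) (LinearMap.restrictScalars_injective R)
    exact .equiv (Abelian.Ext.linearEquiv₀.trans ModuleCat.homLinearEquiv).symm
  | succ n ih =>
    obtain ⟨S, hS, rfl, _, _, _⟩ := exists_shortExact_projective_finite M
    exact .of_surjective (hS.extClass.precompOfLinear R N (add_comm 1 n))
      (precomp_extClass_surjective_of_projective_X₂ N hS n)

/-- The sequence `M ⟶ M ⟶ M / xM` of modules over an `R`-algebra given by multiplication by the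
scalar `x : R`; the quotient is formed over the algebra rather than over `R`. -/
abbrev algebraSMulShortComplex (M : ModuleCat.{u} Λ) (x : R) : ShortComplex (ModuleCat.{u} Λ) where
  f := x • 𝟙 M
  g := ModuleCat.ofHom (LinearMap.range (x • 𝟙 M : M ⟶ M).hom).mkQ
  zero := by
    ext m
    exact (Submodule.Quotient.mk_eq_zero _).mpr (LinearMap.mem_range_self _ _)

theorem shortExact_algebraSMulShortComplex {M : ModuleCat.{u} Λ} {x : R}
    (hx : IsSMulRegular M x) : (algebraSMulShortComplex M x).ShortExact where
  exact := (ShortComplex.ShortExact.moduleCat_exact_iff_function_exact _).mpr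
    (LinearMap.exact_map_mkQ_range _)
  mono_f := (ModuleCat.mono_iff_injective _).mpr hx
  epi_g := (ModuleCat.epi_iff_surjective _).mpr (Submodule.mkQ_surjective _)

/-- The `R`-module underlying the last term of `algebraSMulShortComplex M x` is `M / xM`. -/
def quotSMulTopEquiv (M : ModuleCat.{u} Λ) (x : R) :
    QuotSMulTop x M ≃ₗ[R] (algebraSMulShortComplex M x).X₃ :=
  Submodule.quotEquivOfEq (x • (⊤ : Submodule R M))
    ((LinearMap.range (x • 𝟙 M : M ⟶ M).hom).restrictScalars R) (by
      ext m
      simp [Submodule.mem_smul_pointwise_iff_exists]) ≪≫ₗ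
  Submodule.Quotient.restrictScalarsEquiv R (LinearMap.range (x • 𝟙 M : M ⟶ M).hom)

variable [IsNoetherianRing R] [IsLocalRing R] [Module.Finite R Λ]

-- The long exact sequence makes `x` act surjectively on `Ext^n(M, N)`, which then vanishes by
-- Nakayama's lemma.
theorem hasProjectiveDimensionLT_of_isSMulRegular {M : ModuleCat.{u} Λ} [Module.Finite Λ M]
    {x : R} (hx : x ∈ maximalIdeal R) (hreg : IsSMulRegular M x) {n : ℕ}
    (h : HasProjectiveDimensionLT (algebraSMulShortComplex M x).X₃ (n + 1)) :
    HasProjectiveDimensionLT M n := by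
  have : IsNoetherianRing Λ := isNoetherian_of_tower R inferInstance
  refine hasProjectiveDimensionLT_of_forall_finite M n fun N hN ↦ ?_
  have : Module.Finite R (Abelian.Ext M N n) := module_finite_ext M N n
  have hsurj (e : Abelian.Ext M N n) : ∃ e', x • e' = e := by
    obtain ⟨e', he'⟩ := Abelian.Ext.contravariant_sequence_exact₁
      (shortExact_algebraSMulShortComplex hreg) N e (add_comm 1 n)
      (Abelian.Ext.eq_zero_of_hasProjectiveDimensionLT _ (n + 1) le_rfl)
    have hsmul : Abelian.Ext.mk₀ (x • 𝟙 M) = x • Abelian.Ext.mk₀ (𝟙 M) := Abelian.Ext.mk₀_smul x _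
    exact ⟨e', by rw [← he', hsmul, Abelian.Ext.smul_comp, Abelian.Ext.mk₀_id_comp]⟩
  by_contra hne
  have := not_subsingleton_iff_nontrivial.mp hne
  refine Submodule.top_ne_pointwise_smul_of_mem_jacobson_annihilator
    (maximalIdeal_le_jacobson (Module.annihilator R (Abelian.Ext M N n)) hx) (Eq.symm ?_)
  rw [eq_top_iff]
  intro e _
  obtain ⟨e', rfl⟩ := hsurj e
  exact Submodule.smul_mem_pointwise_smul _ _ _ trivial

theorem hasProjectiveDimensionLT_of_isWeaklyRegular {rs : List R}
    (hrs : ∀ r ∈ rs, r ∈ maximalIdeal R) {n : ℕ}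
    (hgl : ∀ N : ModuleCat.{u} Λ, Module.Finite Λ N → HasProjectiveDimensionLT N (n + rs.length))
    {M : ModuleCat.{u} Λ} [Module.Finite Λ M] (hreg : RingTheory.Sequence.IsWeaklyRegular M rs) :
    HasProjectiveDimensionLT M n := by
  induction rs generalizing M n with
  | nil => exact hgl M ‹_›
  | cons x rs ih =>
    obtain ⟨hx, hreg⟩ := (RingTheory.Sequence.isWeaklyRegular_cons_iff M x rs).mp hreg
    rw [(quotSMulTopEquiv M x).isWeaklyRegular_congr] at hreg
    have : Module.Finite Λ (algebraSMulShortComplex M x).X₃ :=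
      inferInstanceAs (Module.Finite Λ (M ⧸ LinearMap.range (x • 𝟙 M : M ⟶ M).hom))
    refine hasProjectiveDimensionLT_of_isSMulRegular (hrs x List.mem_cons_self) hx
      (ih (fun r hr ↦ hrs r (List.mem_cons_of_mem x hr)) (fun N hN ↦ ?_) hreg)
    simpa only [List.length_cons, add_right_comm, add_assoc] using hgl N hN

end UpperBound

section LowerBound

open RingTheory.Sequence

universe u

theorem isWeaklyRegular_of_leftInverse {R M N : Type*} [CommRing R] [AddCommGroup M] [Module R M]
    [AddCommGroup N] [Module R N] {f : M →ₗ[R] N} {g : N →ₗ[R] M} (hgf : g ∘ₗ f = .id)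
    {rs : List R} (hrs : IsWeaklyRegular N rs) : IsWeaklyRegular M rs := by
  induction rs generalizing M N with
  | nil => exact .nil R M
  | cons x rs ih =>
    rw [isWeaklyRegular_cons_iff] at hrs ⊢
    refine ⟨hrs.1.of_injective f fun a b hab ↦ ?_, ih (f := QuotSMulTop.map x f)
      (g := QuotSMulTop.map x g) ?_ hrs.2⟩
    · simpa using congr($hgf a = $hgf b) ▸ congr(g $hab)
    · rw [← QuotSMulTop.map_comp, hgf, QuotSMulTop.map_id]

theorem isWeaklyRegular_of_projective {R Λ : Type*} (P : Type*) [CommRing R] [Ring Λ] [Algebra R Λ]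
    [AddCommGroup P] [Module R P] [Module Λ P] [IsScalarTower R Λ P] [Module.Projective Λ P]
    {rs : List R} (hrs : IsWeaklyRegular Λ rs) : IsWeaklyRegular P rs := by
  classical
  obtain ⟨s, hs⟩ := Module.projective_def'.mp ‹Module.Projective Λ P›
  have hfree : IsWeaklyRegular (P →₀ Λ) rs :=
    ((TensorProduct.finsuppScalarLeft R Λ P).isWeaklyRegular_congr rs).mp
      hrs.isWeaklyRegular_lTensor
  exact isWeaklyRegular_of_leftInverse (f := s.restrictScalars R)
    (g := (Finsupp.linearCombination Λ id).restrictScalars R) (LinearMap.ext fun m ↦ congr($hs m))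
    hfree

theorem module_finite_restrictScalars {R : Type*} {Λ : Type u} [CommRing R] [Ring Λ] [Algebra R Λ]
    [Module.Finite R Λ] (M : ModuleCat.{u} Λ) [Module.Finite Λ M] :
    Module.Finite R ((ModuleCat.restrictScalars (algebraMap R Λ)).obj M) :=
  let _ : Module R M := Module.compHom M (algebraMap R Λ)
  have : IsScalarTower R Λ M := .of_algebraMap_smul fun _ _ ↦ rfl
  (.trans Λ M : Module.Finite R M)

theorem shortExact_map_restrictScalars {A B : Type*} [Ring A] [Ring B] (f : A →+* B)
    {S : ShortComplex (ModuleCat.{u} B)} (hS : S.ShortExact) :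
    (S.map (ModuleCat.restrictScalars f)).ShortExact where
  exact := (ShortComplex.ShortExact.moduleCat_exact_iff_function_exact _).mpr
    ((ShortComplex.ShortExact.moduleCat_exact_iff_function_exact S).mp hS.exact)
  mono_f := (ModuleCat.mono_iff_injective _).mpr hS.moduleCat_injective_f
  epi_g := (ModuleCat.epi_iff_surjective _).mpr hS.moduleCat_surjective_g

variable {R : Type u} [CommRing R] [IsNoetherianRing R] [IsLocalRing R]

theorem subsingleton_ext_of_isWeaklyRegular {N M : ModuleCat.{u} R} [Module.Finite R N]
    [Module.Finite R M] (hN : Module.support R N ⊆ PrimeSpectrum.zeroLocus (maximalIdeal R))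
    {rs : List R} (hrs : ∀ r ∈ rs, r ∈ maximalIdeal R) (hreg : IsWeaklyRegular M rs) {i : ℕ}
    (hi : i < rs.length) : Subsingleton (Abelian.Ext N M i) := by
  rcases subsingleton_or_nontrivial M with hM | hM
  · have := (ModuleCat.isZero_of_subsingleton M).hasInjectiveDimensionLT_zero
    exact HasInjectiveDimensionLT.subsingleton M 0 i (Nat.zero_le i) N
  · exact ModuleCat.subsingleton_ext_of_exists_isRegular (maximalIdeal R) N hN M
      (Submodule.top_ne_ideal_smul_of_le_jacobson_annihilator
        (maximalIdeal_le_jacobson _)).symm.lt_top rs hrs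
      (.of_isWeaklyRegular_of_mem_maximalIdeal M hrs hreg) i hi

variable {Λ : Type u} [Ring Λ] [Algebra R Λ] [Module.Finite R Λ]

theorem subsingleton_ext_restrictScalars_of_projective {N : ModuleCat.{u} R} [Module.Finite R N]
    (hN : Module.support R N ⊆ PrimeSpectrum.zeroLocus (maximalIdeal R)) {rs : List R}
    (hrs : ∀ r ∈ rs, r ∈ maximalIdeal R) (hreg : IsWeaklyRegular Λ rs) (P : ModuleCat.{u} Λ)
    [Module.Finite Λ P] [Projective P] {i : ℕ} (hi : i < rs.length) :
    Subsingleton (Abelian.Ext N ((ModuleCat.restrictScalars (algebraMap R Λ)).obj P) i) := by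
  let _ : Module R P := Module.compHom P (algebraMap R Λ)
  have : IsScalarTower R Λ P := .of_algebraMap_smul fun _ _ ↦ rfl
  have : Module.Projective Λ P := (IsProjective.iff_projective P).mpr ‹_›
  have := module_finite_restrictScalars (R := R) P
  exact subsingleton_ext_of_isWeaklyRegular hN hrs (isWeaklyRegular_of_projective P hreg) hi

theorem subsingleton_ext_restrictScalars_of_hasProjectiveDimensionLT {N : ModuleCat.{u} R}
    [Module.Finite R N] (hN : Module.support R N ⊆ PrimeSpectrum.zeroLocus (maximalIdeal R))
    {rs : List R} (hrs : ∀ r ∈ rs, r ∈ maximalIdeal R) (hreg : IsWeaklyRegular Λ rs)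
    (M : ModuleCat.{u} Λ) [Module.Finite Λ M] (n : ℕ) [HasProjectiveDimensionLT M (n + 1)]
    {i : ℕ} (hi : i + n < rs.length) :
    Subsingleton (Abelian.Ext N ((ModuleCat.restrictScalars (algebraMap R Λ)).obj M) i) := by
  have : IsNoetherianRing Λ := isNoetherian_of_tower R inferInstance
  induction n generalizing M i with
  | zero =>
    have : Projective M := projective_iff_hasProjectiveDimensionLT_one.mpr ‹_›
    exact subsingleton_ext_restrictScalars_of_projective hN hrs hreg M hi
  | succ n ih =>
    obtain ⟨S, hS, rfl, _, _, _⟩ := exists_shortExact_projective_finite M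
    have := (hS.hasProjectiveDimensionLT_X₃_iff n inferInstance).mp ‹_›
    have h₁ := ih S.X₁ (i := i + 1) (by omega)
    have h₂ := subsingleton_ext_restrictScalars_of_projective hN hrs hreg S.X₂ (i := i) (by omega)
    refine subsingleton_of_forall_eq 0 fun e ↦ ?_
    obtain ⟨e', rfl⟩ := Abelian.Ext.covariant_sequence_exact₃ N
      (shortExact_map_restrictScalars (algebraMap R Λ) hS) e rfl (h₁.elim _ _)
    obtain rfl : e' = 0 := h₂.elim _ _
    exact Abelian.Ext.zero_comp ..

theorem exists_isRegular_of_hasProjectiveDimensionLT {rs : List R}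
    (hrs : ∀ r ∈ rs, r ∈ maximalIdeal R) (hreg : IsWeaklyRegular Λ rs) (M : ModuleCat.{u} Λ)
    [Module.Finite Λ M] [Nontrivial M] (n : ℕ) [HasProjectiveDimensionLT M (n + 1)] :
    ∃ ts : List R, ts.length = rs.length - n ∧ (∀ t ∈ ts, t ∈ maximalIdeal R) ∧
      IsRegular ((ModuleCat.restrictScalars (algebraMap R Λ)).obj M) ts := by
  have hsupp : Module.support R (R ⧸ maximalIdeal R) =
      PrimeSpectrum.zeroLocus (maximalIdeal R) := by
    rw [Module.support_eq_zeroLocus, Ideal.annihilator_quotient]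
  have := module_finite_restrictScalars (R := R) M
  have : Nontrivial ((ModuleCat.restrictScalars (algebraMap R Λ)).obj M) := ‹Nontrivial M›
  refine ModuleCat.exists_isRegular_of_exists_subsingleton_ext (maximalIdeal R) _ _
    (Submodule.top_ne_ideal_smul_of_le_jacobson_annihilator
      (maximalIdeal_le_jacobson _)).symm.lt_top
    (ModuleCat.of R (R ⧸ maximalIdeal R)) hsupp fun i hi ↦ ?_
  exact subsingleton_ext_restrictScalars_of_hasProjectiveDimensionLT hsupp.le hrs hreg M n
    (by omega)

end LowerBound

open RingTheory.Sequence ModuleCat.Algebra in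
theorem stmt11_general (R : Type) [CommRing R] [IsNoetherianRing R] [IsLocalRing R]
    (Λ : Type) [Ring Λ] [Algebra R Λ] [Module.Finite R Λ] (rs : List R)
    (hrs : ∀ r ∈ rs, r ∈ maximalIdeal R) (hreg : IsWeaklyRegular Λ rs)
    (hgl : ∀ N : ModuleCat Λ, Module.Finite Λ N → pdLE Λ N rs.length)
    (M : ModuleCat Λ) [Module.Finite Λ M] [Nontrivial M] :
    rDepthOver R Λ M + projDim Λ M = rs.length := by
  simp only [pdLE_iff_projectiveDimension_le] at hgl
  obtain ⟨p, hp⟩ := exists_projectiveDimension_eq_natCast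
    (fun h ↦ not_subsingleton M (ModuleCat.isZero_iff_subsingleton.mp h)) (hgl M ‹_›)
  have hpd : p ≤ rs.length := by exact_mod_cast hp ▸ hgl M ‹_›
  suffices hdepth : rDepthOver R Λ M = rs.length - p by
    rw [hdepth, projDim_eq_of_projectiveDimension_eq hp, Nat.sub_add_cancel hpd]
  refine IsGreatest.csSup_eq ⟨?_, ?_⟩
  · have : HasProjectiveDimensionLT M (p + 1) := (projectiveDimension_le_iff M p).mp hp.le
    exact exists_isRegular_of_hasProjectiveDimensionLT hrs hreg M p
  · rintro _ ⟨ts, rfl, hts, hM⟩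
    by_contra! hlt
    have hlt' : HasProjectiveDimensionLT M p := by
      refine hasProjectiveDimensionLT_of_isWeaklyRegular hts (fun N hN ↦ ?_) hM.toIsWeaklyRegular
      have := (projectiveDimension_le_iff N _).mp (hgl N hN)
      exact hasProjectiveDimensionLT_of_ge N _ _ (by omega : rs.length + 1 ≤ _)
    exact (projectiveDimension_lt_iff.mpr hlt').ne hp

/-- Auslander–Buchsbaum formula for regular algebras: let `R` be a complete regular
local ring of Krull dimension `d` and `Λ` a regular `R`-algebra (finitely generated free
as an `R`-module, with centre `R` and global dimension `d = dim R`). Then for every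
finitely generated `Λ`-module `M`, `depth_R M + pd_Λ M = dim R`. -/
theorem stmt11 (R : Type) [CommRing R] [IsNoetherianRing R] [IsLocalRing R]
    (hcomplete : IsAdicComplete (maximalIdeal R) R)
    (d : ℕ) (hdim : ringKrullDim R = d)
    (hregular : ∃ s : Finset R, s.card = d ∧ Ideal.span (s : Set R) = maximalIdeal R)
    (Λ : Type) [Ring Λ] [Algebra R Λ] [Module.Finite R Λ] [Module.Free R Λ]
    (hcenter : Subalgebra.center R Λ = ⊥)
    (hinj : Function.Injective (algebraMap R Λ))
    (hgl_le : ∀ M : ModuleCat Λ, pdLE Λ M d)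
    (hgl_eq : 0 < d → ∃ M : ModuleCat Λ, ¬ pdLE Λ M (d - 1))
    (M : ModuleCat Λ) (hM : Module.Finite Λ M) (hM0 : Nontrivial M) :
    rDepthOver R Λ M + projDim Λ M = d := by
  classical
  obtain ⟨s, rfl, hs⟩ := hregular
  have hspan : Ideal.ofList s.toList = maximalIdeal R := by simpa [Ideal.ofList] using hs
  obtain ⟨-, hreg⟩ := isDomain_and_isWeaklyRegular_of_ofList_eq_maximalIdeal s.toList hspan
    (by simp [hdim])
  have hregΛ : RingTheory.Sequence.IsWeaklyRegular Λ s.toList :=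
    ((TensorProduct.lid R Λ).isWeaklyRegular_congr s.toList).mp hreg.isWeaklyRegular_rTensor
  simpa using stmt11_general R Λ s.toList (fun r hr ↦ hspan ▸ Ideal.subset_span hr) hregΛ
    (fun N _ ↦ by simpa using hgl_le N) M
end
end

section
/- Let G = μ_{ab} ×_{μ_a} μ_{ac} be a finite abelian fibered product of cyclic groups (with respect to fixed surjections μ_{ab} → μ_a and μ_{ac} → μ_a). Then the Schur multiplier H²(G, ℂ*) is isomorphic to a cyclic group of order gcd(b, c). -/
/-- The fibre product `μ_{ab} ×_{μ_a} μ_{ac}` with respect to surjections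
`f : μ_{ab} → μ_a`, `g : μ_{ac} → μ_a`, written additively as a subgroup of
`ℤ/ab × ℤ/ac`. -/
def fibreProd (a b c : ℕ) (f : ZMod (a * b) →+ ZMod a) (g : ZMod (a * c) →+ ZMod a) :
    AddSubgroup (ZMod (a * b) × ZMod (a * c)) :=
  ((f.comp (AddMonoidHom.fst _ _)) - (g.comp (AddMonoidHom.snd _ _))).ker

/-!
For a divisible group `A`, a 2-cocycle on an abelian group `G` acting trivially on `A` is a
coboundary iff it is symmetric, because the abelian extension defined by a symmetric cocycle splits.
So `H²(G, A)` embeds into the alternating pairings `G × G → A` via `x ↦ x(g, h) - x(h, g)`. If `s`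
and `t` generate `G`, such a pairing is determined by its value at `(s, t)`; this value is killed by
every coefficient of a relation `m s + k t = 0`, and each such element is the value of the pairing
of some biadditive cocycle. For the fibre product, take `s = (1, w)` and `t = (0, a)`, where `w`
lifts `f(1) / g(1)`: the relations are spanned by `ab s - bw t` and `c t`, and since `w` is prime to
`a` their coefficients generate the ideal `(gcd(b, c))`. Hence `H²(G, A)` is the `gcd(b, c)`-torsion
of `A`.
-/

open groupCohomology Multiplicative

/-- A symmetric 2-cocycle on an abelian group `G` with values in an abelian group `A` on which `G`
acts trivially. It need not be normalized. -/
structure SymmCocycle (G A : Type*) [AddCommGroup G] [AddCommGroup A] where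
  toFun : G → G → A
  cocycle : ∀ g h j, toFun (g + h) j + toFun g h = toFun h j + toFun g (h + j)
  symm : ∀ g h, toFun g h = toFun h g

namespace SymmCocycle

variable {G A : Type*} [AddCommGroup G] [AddCommGroup A]

instance : CoeFun (SymmCocycle G A) fun _ => G → G → A := ⟨toFun⟩

lemma zero_left (F : SymmCocycle G A) (g : G) : F 0 g = F 0 0 := by
  simpa only [zero_add, add_right_inj, eq_comm] using F.cocycle 0 0 g

/-- The abelian extension of `G` by `A` defined by a symmetric 2-cocycle `F`: the set `A × G` with
addition twisted by `F`. As `F` is not normalized, the neutral element is `(-F 0 0, 0)`. -/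
@[ext]
structure Extension (F : SymmCocycle G A) where
  fst : A
  snd : G

namespace Extension

variable {F : SymmCocycle G A}

instance : Add F.Extension := ⟨fun x y => ⟨x.fst + y.fst + F x.snd y.snd, x.snd + y.snd⟩⟩
instance : Zero F.Extension := ⟨⟨-F 0 0, 0⟩⟩
instance : Neg F.Extension := ⟨fun x => ⟨-x.fst - F (-x.snd) x.snd - F 0 0, -x.snd⟩⟩

@[simp] lemma fst_add (x y : F.Extension) : (x + y).fst = x.fst + y.fst + F x.snd y.snd := rfl
@[simp] lemma snd_add (x y : F.Extension) : (x + y).snd = x.snd + y.snd := rfl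
@[simp] lemma fst_zero : (0 : F.Extension).fst = -F 0 0 := rfl
@[simp] lemma snd_zero : (0 : F.Extension).snd = 0 := rfl
@[simp] lemma fst_neg (x : F.Extension) : (-x).fst = -x.fst - F (-x.snd) x.snd - F 0 0 := rfl
@[simp] lemma snd_neg (x : F.Extension) : (-x).snd = -x.snd := rfl

protected lemma add_comm (x y : F.Extension) : x + y = y + x := by
  ext
  · simp [F.symm x.snd, add_comm]
  · simp [add_comm]

protected lemma add_assoc (x y z : F.Extension) : x + y + z = x + (y + z) := by
  ext
  · have := F.cocycle x.snd y.snd z.snd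
    simp only [fst_add, snd_add]
    grind
  · simp [add_assoc]

protected lemma zero_add (x : F.Extension) : 0 + x = x := by
  ext <;> simp [F.zero_left]

protected lemma neg_add_cancel (x : F.Extension) : -x + x = 0 := by
  ext
  · simp only [fst_add, fst_neg, snd_neg, fst_zero]
    abel
  · simp

instance : AddCommGroup F.Extension where
  add_assoc := Extension.add_assoc
  zero_add := Extension.zero_add
  add_zero x := (x.add_comm 0).trans x.zero_add
  add_comm := Extension.add_comm
  neg_add_cancel := Extension.neg_add_cancel
  nsmul := nsmulRec
  zsmul := zsmulRec

variable (F) in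
/-- The inclusion of the kernel `A` into the extension. The shift by `F 0 0` makes it additive. -/
def inl : A →+ F.Extension :=
  AddMonoidHom.mk' (fun a => ⟨a - F 0 0, 0⟩) fun a b => by
    ext
    · simp only [fst_add]
      abel
    · simp

lemma inl_injective : Function.Injective (inl F) := fun a b h => by
  simpa [inl] using congrArg fst h

lemma mk_zero_add_mk_zero (g h : G) :
    (⟨0, g⟩ + ⟨0, h⟩ : F.Extension) = inl F (F g h) + ⟨0, g + h⟩ := by
  ext
  · simp [inl, F.zero_left]
  · simp [inl]

end Extension

lemma exists_eq_coboundary [DivisibleBy A ℤ] (F : SymmCocycle G A) :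
    ∃ y : G → A, ∀ g h, y h - y (g + h) + y g = F g h := by
  obtain ⟨r, hr⟩ := (Module.Baer.of_divisible A).extension_property_addMonoidHom
    (Extension.inl F) Extension.inl_injective (.id A)
  refine ⟨fun g => r ⟨0, g⟩, fun g h => ?_⟩
  have hmul : r ⟨0, g⟩ + r ⟨0, h⟩ = F g h + r ⟨0, g + h⟩ := by
    rw [← map_add, Extension.mk_zero_add_mk_zero, map_add]
    exact congrArg (· + _) (DFunLike.congr_fun hr (F g h))
  rw [sub_add_eq_add_sub, add_comm, hmul, add_sub_cancel_right]

end SymmCocycle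

/-- The group `Z²(G, A)` of 2-cocycles on an abelian group `G`, written additively, with values in
an abelian group `A` on which `G` acts trivially. -/
abbrev TrivialCocycles₂ (G A : Type) [AddCommGroup G] [AddCommGroup A] : Type :=
  cocycles₂ (Rep.trivial ℤ (Multiplicative G) A)

section CommutatorPairing

variable {G A : Type} [AddCommGroup G] [AddCommGroup A]

lemma mem_cocycles₂_trivial_iff {x : Multiplicative G × Multiplicative G → A} :
    x ∈ cocycles₂ (Rep.trivial ℤ (Multiplicative G) A) ↔ ∀ g h j : G,
      x (ofAdd (g + h), ofAdd j) + x (ofAdd g, ofAdd h) =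
        x (ofAdd h, ofAdd j) + x (ofAdd g, ofAdd (h + j)) :=
  mem_cocycles₂_iff (A := Rep.trivial ℤ (Multiplicative G) A) x

lemma commutator_add_left (x : TrivialCocycles₂ G A) (g h j : G) :
    x (ofAdd (g + h), ofAdd j) - x (ofAdd j, ofAdd (g + h)) =
      x (ofAdd g, ofAdd j) - x (ofAdd j, ofAdd g) +
        (x (ofAdd h, ofAdd j) - x (ofAdd j, ofAdd h)) := by
  have hx := mem_cocycles₂_trivial_iff.1 x.2
  have hghj := hx g h j
  have hjgh := hx j g h
  have hgjh := hx g j h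
  rw [add_comm h j] at hghj
  rw [add_comm j g] at hjgh
  change x _ + x _ = x _ + x _ at hghj hjgh hgjh
  grind

/-- The commutator pairing `(g, h) ↦ x(g, h) - x(h, g)` of a 2-cocycle `x`. In the central extension
defined by `x`, it sends `(g, h)` to the commutator of lifts of `g` and `h`. -/
def commutatorPairing : TrivialCocycles₂ G A →+ G →+ G →+ A :=
  AddMonoidHom.mk'
    (fun x => AddMonoidHom.mk'
      (fun g => AddMonoidHom.mk' (fun h => x (ofAdd g, ofAdd h) - x (ofAdd h, ofAdd g))
        fun h j => by
          rw [← neg_sub, commutator_add_left]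
          abel)
      fun g h => by
        ext j
        exact commutator_add_left x g h j)
    fun x y => by
      ext g h
      exact add_sub_add_comm _ _ _ _

lemma commutatorPairing_apply (x : TrivialCocycles₂ G A) (g h : G) :
    commutatorPairing x g h = x (ofAdd g, ofAdd h) - x (ofAdd h, ofAdd g) := rfl

lemma commutatorPairing_self (x : TrivialCocycles₂ G A) (g : G) : commutatorPairing x g g = 0 :=
  sub_self _

lemma H2π_eq_zero_iff_commutatorPairing_eq_zero [DivisibleBy A ℤ] (x : TrivialCocycles₂ G A) :
    H2π (Rep.trivial ℤ (Multiplicative G) A) x = 0 ↔ commutatorPairing x = 0 := by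
  rw [H2π_eq_zero_iff]
  constructor
  · rintro ⟨y, hy⟩
    have hy' (g h : G) : y (ofAdd h) - y (ofAdd (g + h)) + y (ofAdd g) = x (ofAdd g, ofAdd h) :=
      congrFun hy (ofAdd g, ofAdd h)
    ext g h
    rw [commutatorPairing_apply, ← hy', ← hy', add_comm h g, AddMonoidHom.zero_apply,
      AddMonoidHom.zero_apply]
    abel
  · intro hx
    obtain ⟨y, hy⟩ := SymmCocycle.exists_eq_coboundary
      { toFun := fun g h => x (ofAdd g, ofAdd h)
        cocycle := mem_cocycles₂_trivial_iff.1 x.2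
        symm := fun g h => sub_eq_zero.1 (congr($hx g h)) }
    exact ⟨fun g => y g.toAdd, funext fun g => hy g.1.toAdd g.2.toAdd⟩

/-- A biadditive map, regarded as a 2-cocycle. -/
def biadditiveCocycle (B : G →+ G →+ A) : TrivialCocycles₂ G A :=
  ⟨fun g => B g.1.toAdd g.2.toAdd, mem_cocycles₂_trivial_iff.2 fun g h j => by
    simp only [toAdd_ofAdd, map_add, AddMonoidHom.add_apply]
    abel⟩

lemma commutatorPairing_biadditiveCocycle (B : G →+ G →+ A) (g h : G) :
    commutatorPairing (biadditiveCocycle B) g h = B g h - B h g := rfl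

end CommutatorPairing

section TwoGenerators

open AddSubgroup

variable {G : Type*} [AddCommGroup G] {s t : G}

/-- The coefficients of the relations between `s` and `t`. If `s` and `t` generate `G`, the ideal
generated by these coefficients is the annihilator of `s ∧ t`, which generates `⋀² G`. -/
def relationCoeffs (s t : G) : Set ℤ :=
  {n | ∃ m k : ℤ, m • s + k • t = 0 ∧ (n = m ∨ n = k)}

lemma mem_torsionBySet_relationCoeffs_iff {A : Type*} [AddCommGroup A] {a : A} :
    a ∈ Submodule.torsionBySet ℤ A (relationCoeffs s t) ↔
      ∀ m k : ℤ, m • s + k • t = 0 → m • a = 0 ∧ k • a = 0 := by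
  rw [Submodule.mem_torsionBySet_iff]
  constructor
  · intro ha m k h
    exact ⟨ha ⟨m, m, k, h, .inl rfl⟩, ha ⟨k, m, k, h, .inr rfl⟩⟩
  · rintro ha ⟨n, m, k, h, rfl | rfl⟩
    · exact (ha _ _ h).1
    · exact (ha _ _ h).2

lemma eq_zero_of_alternating_of_closure_pair {A : Type*} [AddCommGroup A]
    (hst : closure {s, t} = ⊤) {B : G →+ G →+ A} (hB : ∀ g, B g g = 0) (h : B s t = 0) : B = 0 := by
  have hts : B t s = 0 := by
    have := hB (s + t)
    simpa [hB, h] using this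
  refine AddMonoidHom.eq_of_eqOn_dense hst ?_
  rintro _ (rfl | rfl) <;> refine AddMonoidHom.eq_of_eqOn_dense hst ?_ <;>
    rintro _ (rfl | rfl) <;> simp [hB, h, hts]

lemma exists_addMonoidHom_of_closure_pair {B : Type*} [AddCommGroup B]
    (hst : closure {s, t} = ⊤) {u v : B}
    (h : ∀ m k : ℤ, m • s + k • t = 0 → m • u + k • v = 0) :
    ∃ φ : G →+ B, φ s = u ∧ φ t = v := by
  let π : ℤ × ℤ →+ G := (zmultiplesHom G s).coprod (zmultiplesHom G t)
  let ψ : ℤ × ℤ →+ B := (zmultiplesHom B u).coprod (zmultiplesHom B v)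
  have hπ : Function.Surjective π := fun g => by
    obtain ⟨m, k, hg⟩ := mem_closure_pair.1 (hst ▸ mem_top g)
    exact ⟨(m, k), hg⟩
  let φ : G →+ B := π.liftOfSurjective hπ ⟨ψ, fun x hx => h x.1 x.2 hx⟩
  have hφ (x : ℤ × ℤ) : φ (π x) = ψ x := π.liftOfRightInverse_comp_apply _ _ _ x
  exact ⟨φ, by simpa [π, ψ] using hφ (1, 0), by simpa [π, ψ] using hφ (0, 1)⟩

lemma exists_biadditive_of_mem_torsionBySet {A : Type*} [AddCommGroup A]
    (hst : closure {s, t} = ⊤) {a : A}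
    (ha : a ∈ Submodule.torsionBySet ℤ A (relationCoeffs s t)) :
    ∃ B : G →+ G →+ A, B s t = a ∧ B t s = 0 := by
  rw [mem_torsionBySet_relationCoeffs_iff] at ha
  obtain ⟨β, hβs, hβt⟩ := exists_addMonoidHom_of_closure_pair hst (u := 0) (v := a)
    fun m k h => by rw [smul_zero, zero_add, (ha m k h).2]
  obtain ⟨B, hBs, hBt⟩ := exists_addMonoidHom_of_closure_pair hst (u := β) (v := 0)
    fun m k h => by
      rw [smul_zero, add_zero]
      refine AddMonoidHom.eq_of_eqOn_dense hst ?_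
      rintro _ (rfl | rfl) <;> simp [hβs, hβt, (ha m k h).1]
  exact ⟨B, by rw [hBs, hβt], by rw [hBt, AddMonoidHom.zero_apply]⟩

end TwoGenerators

section H2

open AddSubgroup

variable {G A : Type} [AddCommGroup G] [AddCommGroup A] {s t : G}

variable (A) in
/-- The value of the commutator pairing at `(s, t)`, as a function of the cocycle. -/
def commutatorAt (s t : G) : TrivialCocycles₂ G A →+ A :=
  ((AddMonoidHom.eval t).comp (AddMonoidHom.eval s)).comp commutatorPairing

lemma commutatorAt_apply (x : TrivialCocycles₂ G A) :
    commutatorAt A s t x = commutatorPairing x s t := rfl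

lemma ker_H2π_eq_ker_commutatorAt [DivisibleBy A ℤ] (hst : closure {s, t} = ⊤) :
    (H2π (Rep.trivial ℤ (Multiplicative G) A)).hom.toAddMonoidHom.ker =
      (commutatorAt A s t).ker := by
  ext x
  refine (H2π_eq_zero_iff_commutatorPairing_eq_zero x).trans ⟨fun hx => ?_, fun hx => ?_⟩
  · rw [AddMonoidHom.mem_ker, commutatorAt_apply, hx]
    rfl
  · exact eq_zero_of_alternating_of_closure_pair hst (commutatorPairing_self x) hx

lemma range_commutatorAt (hst : closure {s, t} = ⊤) :
    (commutatorAt A s t).range =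
      (Submodule.torsionBySet ℤ A (relationCoeffs s t)).toAddSubgroup := by
  apply le_antisymm
  · rintro _ ⟨x, rfl⟩
    refine mem_torsionBySet_relationCoeffs_iff.2 fun m k h => ?_
    rw [commutatorAt_apply]
    constructor
    · simpa [commutatorPairing_self] using congr(commutatorPairing x $h t)
    · simpa [commutatorPairing_self] using congr(commutatorPairing x s $h)
  · intro a ha
    obtain ⟨B, hBst, hBts⟩ := exists_biadditive_of_mem_torsionBySet hst ha
    exact ⟨biadditiveCocycle B, by
      rw [commutatorAt_apply, commutatorPairing_biadditiveCocycle, hBst, hBts, sub_zero]⟩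

/-- The second cohomology of an abelian group `G = ⟨s, t⟩` with divisible trivial coefficients `A`:
the class of `x` is sent to `x(s, t) - x(t, s)`. -/
noncomputable def H2AddEquivTorsionBySet [DivisibleBy A ℤ] (hst : closure {s, t} = ⊤) :
    groupCohomology (Rep.trivial ℤ (Multiplicative G) A) 2 ≃+
      Submodule.torsionBySet ℤ A (relationCoeffs s t) :=
  (QuotientAddGroup.quotientKerEquivOfSurjective _
    ((ModuleCat.epi_iff_surjective (H2π (Rep.trivial ℤ (Multiplicative G) A))).1
      inferInstance)).symm.trans <|
  (QuotientAddGroup.quotientAddEquivOfEq (ker_H2π_eq_ker_commutatorAt hst)).trans <|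
  (QuotientAddGroup.quotientKerEquivRange (commutatorAt A s t)).trans <|
  AddEquiv.addSubgroupCongr (range_commutatorAt hst)

end H2

section ZMod

lemma addMonoidHom_zmod_apply_intCast {m n : ℕ} (f : ZMod m →+ ZMod n) (k : ℤ) : f k = k * f 1 := by
  rw [← zsmul_one, map_zsmul, zsmul_eq_mul]

lemma isUnit_map_one_of_surjective {m n : ℕ} {f : ZMod m →+ ZMod n}
    (hf : Function.Surjective f) : IsUnit (f 1) := by
  obtain ⟨x, hx⟩ := hf 1
  obtain ⟨k, rfl⟩ := ZMod.intCast_surjective x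
  rw [addMonoidHom_zmod_apply_intCast] at hx
  exact .of_mul_eq_one_right _ hx

lemma exists_isCoprime_intCast_mul_eq {n : ℕ} {u v : ZMod n} (hu : IsUnit u) (hv : IsUnit v) :
    ∃ w : ℤ, IsCoprime (n : ℤ) w ∧ w * v = u := by
  obtain ⟨v, rfl⟩ := hv
  obtain ⟨w, hw⟩ := ZMod.intCast_surjective (u * (↑v⁻¹ : ZMod n))
  refine ⟨w, (ZMod.coe_int_isUnit_iff_isCoprime w n).1 ?_, ?_⟩
  · rw [hw]
    exact hu.mul v⁻¹.isUnit
  · rw [hw, Units.inv_mul_cancel_right]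

end ZMod

namespace fibreProd

variable {a b c : ℕ} {f : ZMod (a * b) →+ ZMod a} {g : ZMod (a * c) →+ ZMod a} {w : ℤ}

lemma intCast_mem_iff (m n : ℤ) :
    ((m, n) : ZMod (a * b) × ZMod (a * c)) ∈ fibreProd a b c f g ↔
      (m : ZMod a) * f 1 = n * g 1 := by
  rw [← addMonoidHom_zmod_apply_intCast, ← addMonoidHom_zmod_apply_intCast, ← sub_eq_zero]
  rfl

/-- The element `(1, w)` of the fibre product, where `w` lifts `f 1 / g 1`. -/
def liftGen (hw : w * g 1 = f 1) : fibreProd a b c f g :=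
  ⟨((1 : ℤ), w), by rw [intCast_mem_iff, Int.cast_one, one_mul, hw]⟩

variable (f g) in
/-- The element `(0, a)`, which generates the kernel of the projection of the fibre product to
`ZMod (a * b)`. -/
def kerGen : fibreProd a b c f g :=
  ⟨((0 : ℤ), (a : ℤ)), (intCast_mem_iff 0 a).2 (by simp)⟩

lemma coe_zsmul_add_zsmul (hw : w * g 1 = f 1) (m k : ℤ) :
    ((m • liftGen hw + k • kerGen f g : fibreProd a b c f g) : ZMod (a * b) × ZMod (a * c)) =
      ((m : ZMod (a * b)), ((w * m + a * k : ℤ) : ZMod (a * c))) := by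
  ext <;> simp [liftGen, kerGen, mul_comm]

lemma closure_liftGen_kerGen (hw : w * g 1 = f 1) (hg : IsUnit (g 1)) :
    AddSubgroup.closure {liftGen hw, kerGen f g} = (⊤ : AddSubgroup (fibreProd a b c f g)) := by
  refine (AddSubgroup.eq_top_iff' _).2 ?_
  rintro ⟨⟨x, y⟩, hxy⟩
  obtain ⟨m, rfl⟩ := ZMod.intCast_surjective x
  obtain ⟨n, rfl⟩ := ZMod.intCast_surjective y
  have hmn : ((n - w * m : ℤ) : ZMod a) = 0 := by
    rw [intCast_mem_iff, ← hw, ← mul_assoc, hg.mul_left_inj] at hxy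
    rw [Int.cast_sub, Int.cast_mul, ← hxy, mul_comm, sub_self]
  obtain ⟨k, hk⟩ := (ZMod.intCast_zmod_eq_zero_iff_dvd _ _).1 hmn
  refine AddSubgroup.mem_closure_pair.2 ⟨m, k, Subtype.ext ?_⟩
  rw [coe_zsmul_add_zsmul, ← hk, add_sub_cancel]

lemma zsmul_add_zsmul_eq_zero_iff (hw : w * g 1 = f 1) (m k : ℤ) :
    m • liftGen hw + k • kerGen f g = (0 : fibreProd a b c f g) ↔
      (a * b : ℤ) ∣ m ∧ (a * c : ℤ) ∣ w * m + a * k := by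
  rw [← Subtype.coe_inj, coe_zsmul_add_zsmul, ← Nat.cast_mul, ← Nat.cast_mul,
    ← ZMod.intCast_zmod_eq_zero_iff_dvd, ← ZMod.intCast_zmod_eq_zero_iff_dvd]
  exact Prod.ext_iff

lemma gcd_dvd_of_mem_relationCoeffs (ha : a ≠ 0) (hw : w * g 1 = f 1) {n : ℤ}
    (hn : n ∈ relationCoeffs (liftGen (b := b) hw) (kerGen f g)) : (b.gcd c : ℤ) ∣ n := by
  obtain ⟨m, k, h, hmk⟩ := hn
  obtain ⟨⟨m', rfl⟩, hc⟩ := (zsmul_add_zsmul_eq_zero_iff hw m k).1 h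
  have hdb : (b.gcd c : ℤ) ∣ b := Int.natCast_dvd_natCast.2 (b.gcd_dvd_left c)
  have hdc : (b.gcd c : ℤ) ∣ c := Int.natCast_dvd_natCast.2 (b.gcd_dvd_right c)
  rcases hmk with rfl | rfl
  · exact (hdb.mul_left _).mul_right _
  · have hck : (c : ℤ) ∣ b * (w * m') + n := by
      refine Int.dvd_of_mul_dvd_mul_left (Nat.cast_ne_zero.2 ha) ?_
      convert hc using 1
      ring
    exact (dvd_add_right (hdb.mul_right _)).1 (hdc.trans hck)

lemma gcd_mem_span_relationCoeffs (hw : w * g 1 = f 1) (haw : IsCoprime (a : ℤ) w) :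
    (b.gcd c : ℤ) ∈ Ideal.span (relationCoeffs (liftGen (b := b) hw) (kerGen f g)) := by
  set I := Ideal.span (relationCoeffs (liftGen (b := b) hw) (kerGen f g))
  have hrel : (a * b : ℤ) • liftGen hw + (-(b * w) : ℤ) • kerGen f g = 0 :=
    (zsmul_add_zsmul_eq_zero_iff hw _ _).2 ⟨dvd_rfl, by ring_nf; exact dvd_zero _⟩
  have hab : (a * b : ℤ) ∈ I := Ideal.subset_span ⟨_, _, hrel, .inl rfl⟩
  have hbw : (b * w : ℤ) ∈ I := neg_mem_iff.1 (Ideal.subset_span ⟨_, _, hrel, .inr rfl⟩)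
  have hc : (c : ℤ) ∈ I := Ideal.subset_span
    ⟨0, c, (zsmul_add_zsmul_eq_zero_iff hw _ _).2 (by simp), .inr rfl⟩
  have hb : (b : ℤ) ∈ I := by
    obtain ⟨u, v, huv⟩ := haw
    have : (b : ℤ) = u * (a * b) + v * (b * w) := by linear_combination -(b : ℤ) * huv
    rw [this]
    exact add_mem (I.mul_mem_left u hab) (I.mul_mem_left v hbw)
  rw [Nat.gcd_eq_gcd_ab]
  exact add_mem (I.mul_mem_right _ hb) (I.mul_mem_right _ hc)

lemma span_relationCoeffs (ha : a ≠ 0) (hw : w * g 1 = f 1) (haw : IsCoprime (a : ℤ) w) :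
    Ideal.span (relationCoeffs (liftGen (b := b) hw) (kerGen f g)) =
      Ideal.span {(b.gcd c : ℤ)} := by
  apply le_antisymm
  · exact Ideal.span_le.2 fun n hn =>
      Ideal.mem_span_singleton.2 (gcd_dvd_of_mem_relationCoeffs ha hw hn)
  · exact (Ideal.span_singleton_le_iff_mem _).2 (gcd_mem_span_relationCoeffs hw haw)

end fibreProd

section Units

noncomputable instance divisibleByIntAdditiveUnits {K : Type*} [Field K] [IsAlgClosed K] :
    DivisibleBy (Additive Kˣ) ℤ :=
  have : DivisibleBy (Additive Kˣ) ℕ := divisibleByOfSMulRightSurj _ _ fun {n} hn x => by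
    obtain ⟨z, hz⟩ := IsAlgClosed.exists_pow_nat_eq (x.toMul : K) (Nat.pos_of_ne_zero hn)
    have hz0 : z ≠ 0 := by
      rintro rfl
      exact x.toMul.ne_zero (by rw [← hz, zero_pow hn])
    exact ⟨.ofMul (Units.mk0 z hz0), congrArg Additive.ofMul (Units.ext hz)⟩
  AddGroup.divisibleByIntOfDivisibleByNat _

/-- The `n`-torsion of `Mˣ` is cyclic of order `n` if `M` has enough `n`th roots of unity. -/
noncomputable def torsionByUnitsAddEquivZMod (M : Type*) [CommMonoid M] (n : ℕ) [NeZero n]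
    [HasEnoughRootsOfUnity M n] : AddSubgroup.torsionBy (Additive Mˣ) n ≃+ ZMod n :=
  have h : (AddSubgroup.torsionBy (Additive Mˣ) n) = (rootsOfUnity n M).toAddSubgroup := by
    ext x
    exact AddSubgroup.torsionBy.nsmul_iff
  (AddEquiv.addSubgroupCongr h).trans <|
    (zmodAddEquivOfGenerator (G := Additive (rootsOfUnity n M))
      (IsAddCyclic.exists_generator.choose_spec)
      (HasEnoughRootsOfUnity.natCard_rootsOfUnity M n)).symm

end Units

theorem stmt17_general {A : Type} [AddCommGroup A] [DivisibleBy A ℤ] (a b c : ℕ) (ha : 0 < a)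
    (f : ZMod (a * b) →+ ZMod a) (g : ZMod (a * c) →+ ZMod a)
    (hf : Function.Surjective f) (hg : Function.Surjective g) :
    Nonempty ((groupCohomology (Rep.trivial ℤ (Multiplicative ↥(fibreProd a b c f g)) A) 2) ≃+
      AddSubgroup.torsionBy A (b.gcd c)) := by
  have hf1 := isUnit_map_one_of_surjective hf
  have hg1 := isUnit_map_one_of_surjective hg
  obtain ⟨w, haw, hw⟩ := exists_isCoprime_intCast_mul_eq hf1 hg1
  have htorsion : Submodule.torsionBySet ℤ A
      (relationCoeffs (fibreProd.liftGen (b := b) hw) (fibreProd.kerGen f g)) =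
        Submodule.torsionBy ℤ A (b.gcd c) := by
    rw [Submodule.torsionBySet_eq_torsionBySet_span, fibreProd.span_relationCoeffs ha.ne' hw haw,
      Submodule.torsionBySet_ideal_span_singleton_eq]
  exact ⟨(H2AddEquivTorsionBySet (fibreProd.closure_liftGen_kerGen hw hg1)).trans
    (LinearEquiv.ofEq _ _ htorsion).toAddEquiv⟩

/-- Let `G = μ_{ab} ×_{μ_a} μ_{ac}` be the fibre product of cyclic groups with respect to
fixed surjections `μ_{ab} → μ_a` and `μ_{ac} → μ_a`. Then the Schur multiplier
`H²(G, ℂ*)` is cyclic of order `gcd(b, c)`. -/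
theorem stmt17 (a b c : ℕ) (ha : 0 < a) (hb : 0 < b) (hc : 0 < c)
    (f : ZMod (a * b) →+ ZMod a) (g : ZMod (a * c) →+ ZMod a)
    (hf : Function.Surjective f) (hg : Function.Surjective g) :
    Nonempty ((groupCohomology
        (Rep.trivial ℤ (Multiplicative ↥(fibreProd a b c f g)) (Additive ℂˣ)) 2) ≃+
      ZMod (Nat.gcd b c)) := by
  have : NeZero (b.gcd c) := ⟨(Nat.gcd_pos_of_pos_left c hb).ne'⟩
  exact (stmt17_general a b c ha f g hf hg).map (·.trans (torsionByUnitsAddEquivZMod ℂ (b.gcd c)))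
end

section
/- Let G = (2m, 2m; G₁, G₁) ⊂ GL₂ be the group μ_{2m}·G₁ (m a positive integer, G₁ ⊂ SL₂ a finite subgroup containing -I). Then H²(G, ℂ*) is isomorphic to Hom(μ_m, (G₁/⟨-I⟩)^∨), i.e., the group of characters χ of G₁ of order dividing m that are trivial on -I. -/
open Matrix

/-- The scalar matrix `z·I` as an element of `GL₂(ℂ)`, for a unit `z`. -/
noncomputable def scalarGL (z : ℂˣ) : GL (Fin 2) ℂ :=
  Units.map (algebraMap ℂ (Matrix (Fin 2) (Fin 2) ℂ)).toMonoidHom z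

/-- The subgroup `G = μ_{2m}·G₁` of `GL₂(ℂ)` generated by the scalars `μ_{2m}`
together with `G₁`. -/
noncomputable def muG (m : ℕ) (G₁ : Subgroup (GL (Fin 2) ℂ)) : Subgroup (GL (Fin 2) ℂ) :=
  Subgroup.closure ((scalarGL '' {z : ℂˣ | z ^ (2 * m) = 1}) ∪ (G₁ : Set (GL (Fin 2) ℂ)))

/-- The group of characters `χ` of `G₁` with `χ^m = 1` which are trivial on a fixed
element `negI` (the matrix `-I`); i.e. `Hom(μ_m, (G₁/⟨-I⟩)^∨)`. -/
def charSubgroup (G₁ : Subgroup (GL (Fin 2) ℂ)) (m : ℕ) (negI : ↥G₁) :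
    Subgroup (↥G₁ →* ℂˣ) where
  carrier := {χ | χ ^ m = 1 ∧ χ negI = 1}
  one_mem' := by simp
  mul_mem' := by
    rintro χ ψ ⟨h1, h2⟩ ⟨h3, h4⟩
    exact ⟨by rw [mul_pow, h1, h3]; ext x; simp, by simp [h2, h4]⟩
  inv_mem' := by
    rintro χ ⟨h1, h2⟩
    exact ⟨by rw [inv_pow, h1]; ext x; simp, by simp [h2]⟩

/-!
The group `G = μ_{2m}·G₁` is the central product of `G₁` and the cyclic group generated by a scalar
`ζ` of order `2m`, amalgamated along `ζ ^ m = -I`. A 2-cocycle `c` of `G` yields the character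
`h ↦ c (h, ζ) / c (ζ, h)` of `G₁`, the commutator of lifts of `h` and `ζ` to the central extension
defined by `c`. As `H²(G₁, ℂˣ) = 0`, it has order dividing `m` and kills `-I`. If it is trivial,
then `ζ` lifts to a central element of the extension, which is therefore the central product of its
restriction to `G₁` with a cyclic group; a retraction of that restriction onto `ℂˣ` extends because
`ℂˣ` has `m`-th roots. Conversely such a character `χ` comes from the bilinear cocycle on `G` which
sends `(ζ ^ k * h, ζ ^ l * h')` to `χ h ^ l`.

For `H²(G₁, ℂˣ) = 0`, a central extension by a divisible group retracts as soon as its kernel meets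
the commutator subgroup trivially, and by the transfer this may be checked on Sylow subgroups. A
finite abelian subgroup of `SL₂` is cyclic, so commuting elements of `G₁` lie in a common cyclic
subgroup and have commuting lifts. A nonabelian Sylow subgroup `P`, being nilpotent, has a
noncentral element `x` with `⁅x, P⁆` central; the centralizer of `x` is abelian and is the kernel
of `g ↦ ⁅x, g⁆`, so `P` is cyclic modulo an abelian normal subgroup. Every element of the
commutator subgroup of the restricted extension is then a single commutator `⁅a, w⁆`, and it is
trivial if it lies over `1`, as then `a` and `w` have commuting images in `P`.
-/

section Divisible

variable {A : Type*} [CommGroup A] [RootableBy A ℕ]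

noncomputable instance rootableByUnits {K : Type*} [Field K] [IsAlgClosed K] : RootableBy Kˣ ℕ :=
  rootableByOfPowLeftSurj _ _ fun {n} hn a => by
    obtain ⟨w, hw⟩ := IsAlgClosed.exists_pow_nat_eq (a : K) (Nat.pos_of_ne_zero hn)
    have hunit : IsUnit w := (isUnit_pow_iff hn).1 (hw ▸ a.isUnit)
    exact ⟨hunit.unit, Units.ext hw⟩

theorem exists_comp_eq_of_injective {B C : Type*} [CommGroup B] [CommGroup C] {i : B →* C}
    (hi : Function.Injective i) (f : B →* A) : ∃ F : C →* A, F.comp i = f := by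
  let _ : DivisibleBy (Additive A) ℕ := divisibleByOfSMulRightSurj _ _
    fun {_} hn => RootableBy.surjective_pow A ℕ hn
  let _ : DivisibleBy (Additive A) ℤ := AddGroup.divisibleByIntOfDivisibleByNat _
  obtain ⟨F, hF⟩ := (Module.Baer.of_divisible (Additive A)).extension_property_addMonoidHom
    (MonoidHom.toAdditive i) hi (MonoidHom.toAdditive f)
  exact ⟨MonoidHom.toAdditive.symm F, MonoidHom.toAdditive.injective hF⟩

theorem exists_leftInverse_of_mem_commutator {E : Type*} [Group E] (ι : A →* E)
    (h : ∀ a, ι a ∈ commutator E → a = 1) : ∃ r : E →* A, Function.LeftInverse r ι := by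
  have hinj : Function.Injective (Abelianization.of.comp ι) :=
    (injective_iff_map_eq_one _).2 fun a ha => h a <| by
      rwa [← Abelianization.ker_of, MonoidHom.mem_ker]
  obtain ⟨r, hr⟩ := exists_comp_eq_of_injective hinj (MonoidHom.id A)
  exact ⟨r.comp Abelianization.of, DFunLike.congr_fun hr⟩

end Divisible

section CommutatorSubgroup

open scoped commutatorElement IsMulCommutative

variable {E : Type*} [Group E]

theorem exists_eq_mul_zpow_of_isCyclic {Q : Type*} [Group Q] [IsCyclic Q] (f : E →* Q) :
    ∃ w : E, ∀ e, ∃ (a : f.ker) (k : ℤ), e = a * w ^ k := by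
  obtain ⟨⟨_, w, rfl⟩, hw⟩ := IsCyclic.exists_generator (α := f.range)
  refine ⟨w, fun e => ?_⟩
  obtain ⟨k, hk⟩ := hw ⟨f e, e, rfl⟩
  refine ⟨⟨e * (w ^ k)⁻¹, ?_⟩, k, by group⟩
  rw [MonoidHom.mem_ker, map_mul, map_inv, map_zpow, mul_inv_eq_one]
  exact (congrArg Subtype.val hk).symm

variable (N : Subgroup E) [N.Normal] [IsMulCommutative N] (w : E)

/-- The homomorphism `a ↦ ⁅a, w⁆` of a commutative normal subgroup `N` into itself. -/
def commutatorHom : N →* N :=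
  MonoidHom.id N / (MulAut.conjNormal w).toMonoidHom

theorem coe_commutatorHom (a : N) : (commutatorHom N w a : E) = ⁅(a : E), w⁆ := by
  change (a : E) / (w * a * w⁻¹) = _
  rw [div_eq_mul_inv, commutatorElement_def]
  group

variable {N w}

theorem normal_range_commutatorHom (hw : ∀ e, ∃ (a : N) (k : ℤ), e = a * w ^ k) :
    ((commutatorHom N w).range.map N.subtype).Normal where
  conj_mem := by
    rintro _ ⟨_, ⟨b, rfl⟩, rfl⟩ e
    obtain ⟨a, k, rfl⟩ := hw e
    set c : N := MulAut.conjNormal (w ^ k) b with hc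
    refine ⟨_, ⟨c, rfl⟩, ?_⟩
    have hconj : (commutatorHom N w c : E) = w ^ k * commutatorHom N w b * (w ^ k)⁻¹ := by
      rw [coe_commutatorHom, coe_commutatorHom, conjugate_commutatorElement, hc,
        MulAut.conjNormal_apply, ((Commute.refl w).zpow_left k).eq, mul_inv_cancel_right]
    calc (commutatorHom N w c : E) = a * commutatorHom N w c * (a : E)⁻¹ := by
          rw [setLike_mul_comm a.2 (commutatorHom N w c).2, mul_inv_cancel_right]
      _ = a * w ^ k * commutatorHom N w b * (a * w ^ k)⁻¹ := by rw [hconj]; group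

theorem commutator_le_range_commutatorHom (hw : ∀ e, ∃ (a : N) (k : ℤ), e = a * w ^ k) :
    commutator E ≤ (commutatorHom N w).range.map N.subtype := by
  have := normal_range_commutatorHom hw
  rw [← Subgroup.Normal.quotient_commutative_iff_commutator_le, isMulCommutative_iff]
  let q := QuotientGroup.mk' ((commutatorHom N w).range.map N.subtype)
  have hqw (a : N) : Commute (q a) (q w) := by
    rw [← commutatorElement_eq_one_iff_commute, ← map_commutatorElement, ← coe_commutatorHom]
    exact (QuotientGroup.eq_one_iff _).2 ⟨_, ⟨a, rfl⟩, rfl⟩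
  have hqN (a b : N) : Commute (q a) (q b) := Commute.map (setLike_mul_comm a.2 b.2) q
  intro x y
  obtain ⟨x, rfl⟩ := QuotientGroup.mk'_surjective _ x
  obtain ⟨y, rfl⟩ := QuotientGroup.mk'_surjective _ y
  obtain ⟨a, k, rfl⟩ := hw x
  obtain ⟨b, l, rfl⟩ := hw y
  change Commute (q _) (q _)
  simp only [map_mul, map_zpow]
  exact ((hqN a b).mul_right ((hqw a).zpow_right l)).mul_left
    (((hqw b).symm.zpow_left k).mul_right ((Commute.refl (q w)).zpow_zpow k l))

theorem exists_commutator_eq_commutatorElement {Q : Type*} [Group Q] [IsCyclic Q] (f : E →* Q)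
    [IsMulCommutative f.ker] : ∃ w : E, ∀ e ∈ commutator E, ∃ a : E, e = ⁅a, w⁆ := by
  obtain ⟨w, hw⟩ := exists_eq_mul_zpow_of_isCyclic f
  refine ⟨w, fun e he => ?_⟩
  obtain ⟨_, ⟨a, rfl⟩, rfl⟩ := commutator_le_range_commutatorHom hw he
  exact ⟨a, coe_commutatorHom f.ker w a⟩

end CommutatorSubgroup

section CentralExtension

open scoped commutatorElement

variable {A E G : Type*} [CommGroup A] [Group E] [Group G]

/-- A central extension: an extension of `G` by `A` in which the image of `A` is central. -/
def IsCentralExtension (S : GroupExtension A E G) : Prop :=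
  ∀ a e, Commute (S.inl a) e

/-- An extension retracts if the inclusion of the kernel has a left inverse homomorphism. For a
central extension this is equivalent to being split. -/
def HasRetraction (S : GroupExtension A E G) : Prop :=
  ∃ r : E →* A, Function.LeftInverse r S.inl

/-- The restriction of an extension of `G` to a subgroup of `G`. -/
def restrictExtension (S : GroupExtension A E G) (P : Subgroup G) :
    GroupExtension A (P.comap S.rightHom) P where
  inl := S.inl.codRestrict _ fun a => by
    rw [Subgroup.mem_comap, S.rightHom_inl]
    exact P.one_mem
  rightHom := S.rightHom.subgroupComap P
  inl_injective a b h := S.inl_injective (congrArg Subtype.val h)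
  range_inl_eq_ker_rightHom := by
    ext ⟨e, he⟩
    have hmem : e ∈ S.inl.range ↔ e ∈ S.rightHom.ker := by rw [S.range_inl_eq_ker_rightHom]
    exact (exists_congr fun a => Subtype.ext_iff).trans (hmem.trans
      ⟨fun h => Subtype.ext h, fun h => congrArg Subtype.val h⟩)
  rightHom_surjective := S.rightHom.subgroupComap_surjective_of_surjective P S.rightHom_surjective

namespace IsCentralExtension

variable {S : GroupExtension A E G} (hS : IsCentralExtension S)
include hS

theorem restrict (P : Subgroup G) : IsCentralExtension (restrictExtension S P) :=
  fun a e => Subtype.ext (hS a e)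

theorem commute_of_rightHom_mem_zpowers {g : G} {x y : E}
    (hx : S.rightHom x ∈ Subgroup.zpowers g) (hy : S.rightHom y ∈ Subgroup.zpowers g) :
    Commute x y := by
  obtain ⟨e, rfl⟩ := S.rightHom_surjective g
  have hlift {x : E} (hx : S.rightHom x ∈ Subgroup.zpowers (S.rightHom e)) :
      ∃ (a : A) (k : ℤ), x = S.inl a * e ^ k := by
    obtain ⟨k, hk⟩ := hx
    obtain ⟨a, ha⟩ : x * (e ^ k)⁻¹ ∈ S.inl.range := by
      rw [S.range_inl_eq_ker_rightHom, MonoidHom.mem_ker, map_mul, map_inv, map_zpow,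
        mul_inv_eq_one]
      exact hk.symm
    exact ⟨a, k, by rw [ha, inv_mul_cancel_right]⟩
  obtain ⟨a, i, rfl⟩ := hlift hx
  obtain ⟨b, j, rfl⟩ := hlift hy
  exact (hS a _).mul_left ((hS b _).symm.mul_right ((Commute.refl e).zpow_zpow i j))

theorem hasRetraction_of_isCyclic [RootableBy A ℕ] {Q : Type*} [Group Q] [IsCyclic Q]
    (f : G →* Q) [IsMulCommutative f.ker]
    (hG : ∀ g h : G, Commute g h → ∃ c, g ∈ Subgroup.zpowers c ∧ h ∈ Subgroup.zpowers c) :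
    HasRetraction S := by
  have hlift {x y : E} (h : Commute (S.rightHom x) (S.rightHom y)) : Commute x y := by
    obtain ⟨c, hx, hy⟩ := hG _ _ h
    exact hS.commute_of_rightHom_mem_zpowers hx hy
  have : IsMulCommutative (f.comp S.rightHom).ker :=
    IsMulCommutative.of_setLike_mul_comm fun x hx y hy =>
      hlift (setLike_mul_comm (S := Subgroup G) (s := f.ker) hx hy)
  obtain ⟨w, hw⟩ := exists_commutator_eq_commutatorElement (f.comp S.rightHom)
  refine exists_leftInverse_of_mem_commutator S.inl fun a ha => S.inl_injective ?_
  obtain ⟨e, he⟩ := hw _ ha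
  rw [map_one, he, commutatorElement_eq_one_iff_commute]
  refine hlift ?_
  rw [← commutatorElement_eq_one_iff_commute, ← map_commutatorElement, ← he, S.rightHom_inl]

theorem pow_index_eq_one_of_inl_mem_commutator {P : Subgroup G} [P.FiniteIndex]
    (hP : HasRetraction (restrictExtension S P)) {a : A} (ha : S.inl a ∈ commutator E) :
    a ^ P.index = 1 := by
  obtain ⟨r, hr⟩ := hP
  have hindex := P.index_comap_of_surjective S.rightHom_surjective
  have : (P.comap S.rightHom).FiniteIndex := ⟨hindex ▸ Subgroup.FiniteIndex.index_ne_zero⟩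
  calc a ^ P.index = r ((restrictExtension S P).inl (a ^ P.index)) := (hr _).symm
    _ = r.transfer (S.inl a) := by
        rw [r.transfer_eq_pow (S.inl a) fun k e _ => by
          rw [mul_assoc, ((hS a e).pow_left k).eq, inv_mul_cancel_left]]
        exact congrArg r <| Subtype.ext <|
          (map_pow S.inl a _).trans (congrArg (S.inl a ^ ·) hindex.symm)
    _ = 1 := Abelianization.commutator_subset_ker r.transfer ha

theorem hasRetraction_of_sylow [RootableBy A ℕ] [Finite G]
    (h : ∀ (p : ℕ) [Fact p.Prime] (P : Sylow p G), HasRetraction (restrictExtension S P)) :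
    HasRetraction S := by
  refine exists_leftInverse_of_mem_commutator S.inl fun a ha => ?_
  rw [← orderOf_eq_one_iff]
  by_contra hne
  obtain ⟨p, hp, hpa⟩ := Nat.exists_prime_and_dvd hne
  have : Fact p.Prime := ⟨hp⟩
  let P : Sylow p G := default
  exact P.not_dvd_index <| hpa.trans <| orderOf_dvd_of_pow_eq_one <|
    hS.pow_index_eq_one_of_inl_mem_commutator (h p P) ha

end IsCentralExtension

end CentralExtension

section Plane

open Module Polynomial

variable {K V : Type*} [Field K] [AddCommGroup V] [Module K V] (hV : finrank K V = 2)
include hV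

theorem exists_eq_smul_one_add_smul_of_commute {f a : End K V} (hf : ∀ c : K, f ≠ c • 1)
    (h : Commute a f) : ∃ α β : K, a = α • 1 + β • f := by
  have : FiniteDimensional K V := finite_of_finrank_eq_succ hV
  obtain ⟨v, hv⟩ : ∃ v, LinearIndependent K ![v, f v] := by
    by_contra! hdep
    obtain ⟨c, hc⟩ := LinearMap.exists_eq_smul_id_of_forall_notLinearIndependent hdep
    exact hf c hc
  let B := basisOfLinearIndependentOfCardEqFinrank hv (by rw [hV, Fintype.card_fin])
  have hav : a v = B.repr (a v) 0 • v + B.repr (a v) 1 • f v := by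
    simpa [B, Fin.sum_univ_two] using (B.sum_repr (a v)).symm
  refine ⟨B.repr (a v) 0, B.repr (a v) 1, B.ext fun i => ?_⟩
  fin_cases i
  · simpa [B] using hav
  · have haf : a (f v) = f (a v) := LinearMap.congr_fun h.eq v
    have hfv : f (a v) = f (B.repr (a v) 0 • v + B.repr (a v) 1 • f v) := congrArg f hav
    simpa [B, haf] using hfv

theorem commute_of_commute_of_forall_ne_smul_one {f a b : End K V} (hf : ∀ c : K, f ≠ c • 1)
    (ha : Commute a f) (hb : Commute b f) : Commute a b := by
  obtain ⟨α, β, rfl⟩ := exists_eq_smul_one_add_smul_of_commute hV hf ha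
  exact ((Commute.one_left b).smul_left α).add_left (hb.symm.smul_left β)

theorem exists_forall_apply_eq_smul_of_commute [IsAlgClosed K] {ι : Type*} (f : ι → End K V)
    (hf : ∀ i j, Commute (f i) (f j)) : ∃ v ≠ 0, ∀ i, ∃ c : K, f i v = c • v := by
  have : FiniteDimensional K V := finite_of_finrank_eq_succ hV
  have : Nontrivial V := nontrivial_of_finrank_pos (R := K) (by lia)
  by_cases hscalar : ∀ i, ∃ c : K, f i = c • 1
  · obtain ⟨v, hv⟩ := exists_ne (0 : V)
    refine ⟨v, hv, fun i => ?_⟩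
    obtain ⟨c, hc⟩ := hscalar i
    exact ⟨c, by rw [hc, LinearMap.smul_apply, End.one_apply]⟩
  · push Not at hscalar
    obtain ⟨i, hi⟩ := hscalar
    obtain ⟨l, hl⟩ := End.exists_eigenvalue (f i)
    obtain ⟨v, hv⟩ := hl.exists_hasEigenvector
    refine ⟨v, hv.2, fun j => ?_⟩
    obtain ⟨α, β, h⟩ := exists_eq_smul_one_add_smul_of_commute hV hi (hf j i)
    exact ⟨α + β * l, by
      rw [h, LinearMap.add_apply, LinearMap.smul_apply, LinearMap.smul_apply, End.one_apply,
        hv.apply_eq_smul, add_smul, mul_smul]⟩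

theorem sub_one_sq_eq_zero_of_det_eq_one {f : End K V} (hdet : LinearMap.det f = 1) {v : V}
    (hv : v ≠ 0) (hfv : f v = v) : (f - 1) ^ 2 = 0 := by
  have : FiniteDimensional K V := finite_of_finrank_eq_succ hV
  have hdeg : f.charpoly.natDegree = 2 := f.charpoly_natDegree.trans hV
  have hcoeff2 : f.charpoly.coeff 2 = 1 := by
    simpa [hdeg] using f.charpoly_monic.coeff_natDegree
  have hcoeff0 : f.charpoly.coeff 0 = 1 := by
    simpa [hV, hdet] using f.det_eq_sign_charpoly_coeff.symm
  have hroot : f.charpoly.eval 1 = 0 :=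
    (End.hasEigenvalue_iff_isRoot_charpoly f 1).1 <| End.hasEigenvalue_of_hasEigenvector
      ⟨End.mem_eigenspace_iff.2 (by rw [hfv, one_smul]), hv⟩
  have hsum := f.charpoly.as_sum_range_C_mul_X_pow
  simp only [hdeg, Finset.sum_range_succ, Finset.range_zero, Finset.sum_empty, zero_add, hcoeff0,
    hcoeff2, map_one, pow_zero, mul_one, pow_one, one_mul] at hsum
  have hcoeff1 : f.charpoly.coeff 1 = -2 := by
    rw [hsum] at hroot
    simp only [eval_add, eval_one, eval_mul, eval_C, eval_X, eval_pow, one_pow] at hroot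
    linear_combination hroot
  have hcharpoly : f.charpoly = (X - 1) ^ 2 := by
    rw [hsum, hcoeff1]
    simp only [map_neg, map_ofNat]
    ring
  simpa [hcharpoly] using f.aeval_self_charpoly

theorem eq_one_of_det_eq_one_of_pow_eq_one [CharZero K] {f : End K V}
    (hdet : LinearMap.det f = 1) {n : ℕ} (hn : n ≠ 0) (hfn : f ^ n = 1) {v : V} (hv : v ≠ 0)
    (hfv : f v = v) : f = 1 := by
  have hnil : IsNilpotent (f - 1) :=
    ⟨2, sub_one_sq_eq_zero_of_det_eq_one hV hdet hv hfv⟩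
  have hss : (f - 1).IsSemisimple := by
    rw [← map_one (algebraMap K (End K V)), End.isSemisimple_sub_algebraMap_iff]
    exact End.isSemisimple_of_squarefree_aeval_eq_zero
      (separable_X_pow_sub_C 1 (Nat.cast_ne_zero.2 hn) one_ne_zero).squarefree (by simp [hfn])
  exact sub_eq_zero.1 (End.eq_zero_of_isNilpotent_isSemisimple hnil hss)

end Plane

section FiniteSubgroupsOfSL2

open Module

open scoped commutatorElement

theorem exists_notMem_center_forall_commutator_mem_center {P : Type*} [Group P]
    [Group.IsNilpotent P] (hP : ¬ IsMulCommutative P) :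
    ∃ x ∉ Subgroup.center P, ∀ g, ⁅x, g⁆ ∈ Subgroup.center P := by
  by_contra! h
  have hcenter (n : ℕ) : Subgroup.upperCentralSeries P n ≤ Subgroup.center P := by
    induction n with
    | zero => exact bot_le
    | succ n ih =>
      intro x hx
      by_contra hxc
      obtain ⟨g, hg⟩ := h x hxc
      exact hg (ih (Subgroup.mem_upperCentralSeries_succ_iff.1 hx g))
  obtain ⟨n, hn⟩ := Group.IsNilpotent.nilpotent P
  have htop : Subgroup.center P = ⊤ := top_le_iff.1 (hn ▸ hcenter n)
  exact hP (isMulCommutative_iff.2 fun a b =>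
    (Subgroup.mem_center_iff.1 (htop ▸ Subgroup.mem_top a) b).symm)

theorem exists_hom_center_isMulCommutative_ker {P : Type*} [Group P] [Group.IsNilpotent P]
    (h : ∀ x ∉ Subgroup.center P, ∀ a b : P, Commute a x → Commute b x → Commute a b) :
    ∃ f : P →* Subgroup.center P, IsMulCommutative f.ker := by
  by_cases hP : IsMulCommutative P
  · exact ⟨1, inferInstance⟩
  obtain ⟨x, hx, hcomm⟩ := exists_notMem_center_forall_commutator_mem_center hP
  let f : P →* Subgroup.center P :=
    MonoidHom.mk' (fun g => ⟨⁅x, g⁆, hcomm g⟩) fun g h => Subtype.ext <| by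
      have hg := Subgroup.mem_center_iff.1 (hcomm h) g
      calc ⁅x, g * h⁆ = ⁅x, g⁆ * (g * ⁅x, h⁆) * g⁻¹ := by
            simp only [commutatorElement_def]; group
        _ = ⁅x, g⁆ * ⁅x, h⁆ := by rw [hg]; group
  have hker {g : P} (hg : g ∈ f.ker) : Commute g x :=
    (commutatorElement_eq_one_iff_commute.1 (congrArg Subtype.val hg)).symm
  exact ⟨f, IsMulCommutative.of_setLike_mul_comm fun a ha b hb => h x hx a b (hker ha) (hker hb)⟩

variable {K V G : Type*} [Field K] [AddCommGroup V] [Module K V] [Group G]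
  {ρ : Representation K G V}

variable (hV : finrank K V = 2) (hρ : Function.Injective ρ)
include hV hρ

theorem commute_of_commute_of_notMem_center {x a b : G} (hx : x ∉ Subgroup.center G)
    (ha : Commute a x) (hb : Commute b x) : Commute a b := by
  refine Commute.of_map hρ ?_
  refine commute_of_commute_of_forall_ne_smul_one hV (fun c hc => hx ?_) (ha.map ρ) (hb.map ρ)
  exact Subgroup.mem_center_iff.2 fun g => Commute.of_map hρ <| by
    rw [hc]
    exact (Commute.one_right _).smul_right c

variable [IsAlgClosed K] [CharZero K] [Finite G] (hdet : ∀ g, LinearMap.det (ρ g) = 1)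
include hdet

theorem isCyclic_of_det_eq_one [IsMulCommutative G] : IsCyclic G := by
  obtain ⟨v, hv, heig⟩ := exists_forall_apply_eq_smul_of_commute hV ρ
    fun g h => Commute.map (mul_comm' g h) ρ
  choose χ hχ using heig
  have hsmul : Function.Injective fun c : K => c • v := smul_left_injective K hv
  let f : G →* K :=
    { toFun := χ
      map_one' := hsmul (by simp only [← hχ, map_one, End.one_apply, one_smul])
      map_mul' := fun g h => hsmul <| by
        change χ (g * h) • v = (χ g * χ h) • v
        rw [← hχ, map_mul, End.mul_apply, hχ h, map_smul, hχ g, smul_smul, mul_comm] }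
  have hfixed (g : G) (hg : f g = 1) : g = 1 := hρ <| by
    rw [map_one]
    refine eq_one_of_det_eq_one_of_pow_eq_one hV (hdet g) Nat.card_pos.ne'
      (by rw [← map_pow, pow_card_eq_one', map_one]) hv ?_
    rw [hχ, show χ g = 1 from hg, one_smul]
  exact isCyclic_of_injective_ringHom f ((injective_iff_map_eq_one f).2 hfixed)

theorem exists_mem_zpowers_of_commute {a b : G} (h : Commute a b) :
    ∃ c, a ∈ Subgroup.zpowers c ∧ b ∈ Subgroup.zpowers c := by
  let H := Subgroup.closure {a, b}
  have : IsMulCommutative H := Subgroup.isMulCommutative_closure <| by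
    rintro x (rfl | rfl) y (rfl | rfl)
    exacts [rfl, h, h.symm, rfl]
  have : IsCyclic H := isCyclic_of_det_eq_one (ρ := ρ.comp H.subtype) hV
    (hρ.comp H.subtype_injective) fun g => hdet g
  obtain ⟨c, hc⟩ := Subgroup.isCyclic_iff_exists_zpowers_eq_top H |>.1 this
  exact ⟨c, hc ▸ Subgroup.subset_closure (by simp), hc ▸ Subgroup.subset_closure (by simp)⟩

theorem hasRetraction_of_det_eq_one {A E : Type*} [CommGroup A] [RootableBy A ℕ] [Group E]
    {S : GroupExtension A E G} (hS : IsCentralExtension S) : HasRetraction S := by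
  refine hS.hasRetraction_of_sylow fun p _ P => ?_
  have hρP : Function.Injective (ρ.comp (P : Subgroup G).subtype) :=
    hρ.comp (P : Subgroup G).subtype_injective
  have hdetP (g : P) : LinearMap.det (ρ.comp (P : Subgroup G).subtype g) = 1 := hdet g
  have : Group.IsNilpotent P := P.isPGroup'.isNilpotent
  obtain ⟨f, _⟩ := exists_hom_center_isMulCommutative_ker fun x hx a b =>
    commute_of_commute_of_notMem_center hV hρP hx
  have : IsCyclic (Subgroup.center P) :=
    isCyclic_of_det_eq_one
      (ρ := (ρ.comp (P : Subgroup G).subtype).comp (Subgroup.center P).subtype) hV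
      (hρP.comp (Subgroup.center P).subtype_injective) fun g => hdetP g
  exact (hS.restrict P).hasRetraction_of_isCyclic f fun g h =>
    exists_mem_zpowers_of_commute hV hρP hdetP

end FiniteSubgroupsOfSL2

section TwoCocycle

variable {A G H : Type*} [CommGroup A] [Group G] [Group H]

/-- A 2-cocycle of `G` with values in `A`, on which `G` acts trivially; it need not be normalised.
Mathlib's `groupCohomology.IsMulCocycle₂` would need the trivial action as an instance. -/
def IsTwoCocycle (c : G → G → A) : Prop :=
  ∀ g h j, c (g * h) j * c g h = c h j * c g (h * j)

/-- A 2-coboundary of `G` with values in `A`, on which `G` acts trivially. -/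
def IsTwoCoboundary (c : G → G → A) : Prop :=
  ∃ b : G → A, ∀ g h, c g h * b (g * h) = b g * b h

theorem IsTwoCoboundary.eq_swap {c : G → G → A} (hc : IsTwoCoboundary c) {g h : G}
    (hgh : Commute g h) : c g h = c h g := by
  obtain ⟨b, hb⟩ := hc
  refine mul_right_cancel (b := b (g * h)) ?_
  rw [hb, hgh.eq, hb, mul_comm]

theorem isTwoCocycle_bilinear (B : G →* G →* A) : IsTwoCocycle fun g h => B h g := by
  intro g h j
  simp only [map_mul, MonoidHom.mul_apply, mul_comm, mul_left_comm]

namespace IsTwoCocycle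

variable {c : G → G → A} (hc : IsTwoCocycle c)
include hc

theorem comp (j : H →* G) : IsTwoCocycle fun x y => c (j x) (j y) := fun x y z => by
  simpa only [map_mul] using hc (j x) (j y) (j z)

theorem one_left (g : G) : c 1 g = c 1 1 := by
  have h := hc 1 1 g
  rw [one_mul, one_mul] at h
  exact (mul_left_cancel h).symm

theorem one_right (g : G) : c g 1 = c 1 1 := by
  have h := hc g 1 1
  rw [mul_one, mul_one] at h
  exact mul_right_cancel h

theorem div_swap_mul {z g h : G} (hg : Commute g z) (hh : Commute h z) :
    c (g * h) z / c z (g * h) = c g z / c z g * (c h z / c z h) := by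
  rw [div_mul_div_comm, div_eq_div_iff_mul_eq_mul]
  refine mul_right_cancel (b := c g h) ?_
  calc c (g * h) z * (c z g * c z h) * c g h
      = c (g * h) z * c g h * (c z g * c z h) := mul_right_comm _ _ _
    _ = c h z * c z g * (c z h * c g (z * h)) := by
        rw [hc, hh.eq, mul_comm (c z h), mul_assoc, mul_assoc, mul_left_comm (c g _)]
    _ = c h z * c g z * (c (z * g) h * c z g) := by
        rw [← hc g z h, hg.eq, mul_comm (c _ h), mul_assoc, mul_left_comm (c z g), ← mul_assoc,
          mul_comm (c z g)]
    _ = c g z * c h z * c z (g * h) * c g h := by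
        rw [hc, mul_comm (c h z), mul_comm (c g h), mul_assoc, mul_assoc, mul_assoc]

theorem div_swap_pow {z g : G} (hg : Commute g z) (k : ℕ) :
    c (g ^ k) z / c z (g ^ k) = (c g z / c z g) ^ k := by
  induction k with
  | zero => rw [pow_zero, pow_zero, hc.one_left z, hc.one_right z, div_self']
  | succ k ih => rw [pow_succ, hc.div_swap_mul (hg.pow_left k) hg, ih, pow_succ]

end IsTwoCocycle

/-- The character `g ↦ c (g, ζ) / c (ζ, g)` attached to a 2-cocycle `c` and a central element `ζ`:
the commutator of lifts of `g` and `ζ` to the central extension defined by `c`. -/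
def IsTwoCocycle.swapCharacter {c : G → G → A} (hc : IsTwoCocycle c) {ζ : G}
    (hζ : ∀ g, Commute ζ g) : G →* A :=
  MonoidHom.mk' (fun g => c g ζ / c ζ g) fun g h => hc.div_swap_mul (hζ g).symm (hζ h).symm

/-- The central extension of `G` by `A` defined by a 2-cocycle. Its unit is `⟨(c 1 1)⁻¹, 1⟩`, since
`c` need not be normalised. -/
@[ext]
structure TwistedProduct {c : G → G → A} (hc : IsTwoCocycle c) where
  /-- The component in the kernel, relative to the set-theoretic section `g ↦ ⟨1, g⟩`. -/
  scalar : A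
  base : G

namespace TwistedProduct

variable {c : G → G → A} (hc : IsTwoCocycle c)

instance : Mul (TwistedProduct hc) :=
  ⟨fun x y => ⟨x.scalar * y.scalar * c x.base y.base, x.base * y.base⟩⟩

instance : One (TwistedProduct hc) := ⟨⟨(c 1 1)⁻¹, 1⟩⟩

instance : Inv (TwistedProduct hc) :=
  ⟨fun x => ⟨x.scalar⁻¹ * (c x.base⁻¹ x.base)⁻¹ * (c 1 1)⁻¹, x.base⁻¹⟩⟩

@[simp] theorem scalar_mul (x y : TwistedProduct hc) :
    (x * y).scalar = x.scalar * y.scalar * c x.base y.base := rfl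

@[simp] theorem base_mul (x y : TwistedProduct hc) : (x * y).base = x.base * y.base := rfl

@[simp] theorem scalar_one : (1 : TwistedProduct hc).scalar = (c 1 1)⁻¹ := rfl

@[simp] theorem base_one : (1 : TwistedProduct hc).base = 1 := rfl

@[simp] theorem scalar_inv (x : TwistedProduct hc) :
    x⁻¹.scalar = x.scalar⁻¹ * (c x.base⁻¹ x.base)⁻¹ * (c 1 1)⁻¹ := rfl

@[simp] theorem base_inv (x : TwistedProduct hc) : x⁻¹.base = x.base⁻¹ := rfl

instance : Group (TwistedProduct hc) :=
  Group.ofLeftAxioms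
    (fun x y z => by
      ext1
      · simp only [scalar_mul, base_mul]
        calc x.scalar * y.scalar * c x.base y.base * z.scalar * c (x.base * y.base) z.base
            = x.scalar * y.scalar * z.scalar *
              (c (x.base * y.base) z.base * c x.base y.base) := by
              rw [mul_right_comm (x.scalar * y.scalar), mul_assoc, mul_comm (c x.base y.base)]
          _ = x.scalar * (y.scalar * z.scalar * c y.base z.base) *
              c x.base (y.base * z.base) := by rw [hc]; simp only [mul_assoc]
      · simp [mul_assoc])
    (fun x => by ext1 <;> simp [hc.one_left x.base])
    (fun x => by ext1 <;> simp [mul_assoc, mul_left_comm])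

/-- `TwistedProduct hc` as an extension of `G` by `A`. -/
def extension : GroupExtension A (TwistedProduct hc) G where
  inl :=
    { toFun := fun a => ⟨a * (c 1 1)⁻¹, 1⟩
      map_one' := by ext1 <;> simp
      map_mul' := fun a b => by ext1 <;> simp [mul_assoc, mul_left_comm] }
  rightHom :=
    { toFun := base
      map_one' := rfl
      map_mul' := fun _ _ => rfl }
  inl_injective a b h := mul_right_cancel (congrArg scalar h)
  range_inl_eq_ker_rightHom := by
    ext e
    refine ⟨by rintro ⟨a, rfl⟩; rfl, fun he => ⟨e.scalar * c 1 1, ?_⟩⟩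
    exact TwistedProduct.ext (mul_inv_cancel_right _ _) he.symm
  rightHom_surjective g := ⟨⟨1, g⟩, rfl⟩

@[simp] theorem extension_inl (a : A) : (extension hc).inl a = ⟨a * (c 1 1)⁻¹, 1⟩ := rfl

theorem isCentralExtension : IsCentralExtension (extension hc) := fun a e => by
  ext1 <;> simp [hc.one_left e.base, hc.one_right e.base, mul_comm, mul_left_comm]

variable {hc} in
theorem commute_iff {x y : TwistedProduct hc} :
    Commute x y ↔ Commute x.base y.base ∧ c x.base y.base = c y.base x.base := by
  rw [Commute, SemiconjBy, TwistedProduct.ext_iff, scalar_mul, scalar_mul, mul_comm y.scalar,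
    mul_left_cancel_iff, and_comm]
  rfl

theorem isTwoCoboundary_iff_hasRetraction :
    IsTwoCoboundary c ↔ HasRetraction (extension hc) := by
  constructor
  · rintro ⟨b, hb⟩
    have hb1 : b 1 = c 1 1 := by
      have h := hb 1 1
      rw [one_mul] at h
      exact (mul_right_cancel h).symm
    refine ⟨MonoidHom.mk' (fun x => x.scalar * b x.base) fun x y => ?_, fun a => ?_⟩
    · rw [scalar_mul, base_mul, mul_assoc, hb, mul_mul_mul_comm]
    · exact (congrArg (a * (c 1 1)⁻¹ * ·) hb1).trans (inv_mul_cancel_right _ _)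
  · rintro ⟨r, hr⟩
    refine ⟨fun g => r ⟨1, g⟩, fun g h => ?_⟩
    have hsection : (extension hc).inl (c g h) * ⟨1, g * h⟩ = ⟨1, g⟩ * ⟨1, h⟩ := by
      ext1 <;> simp [hc.one_left (g * h)]
    rw [← map_mul, ← hsection, map_mul, hr]

/-- The map of central extensions induced by a homomorphism of the quotients. -/
def map (j : H →* G) : TwistedProduct (hc.comp j) →* TwistedProduct hc :=
  MonoidHom.mk' (fun x => ⟨x.scalar, j x.base⟩) fun x y =>
    TwistedProduct.ext rfl (map_mul j x.base y.base)

theorem map_inl (j : H →* G) (a : A) :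
    map hc j ((extension (hc.comp j)).inl a) = (extension hc).inl a := by
  ext1 <;> simp [map]

end TwistedProduct

end TwoCocycle

section CyclicCentralProduct

/-- `G` is the central product of `H`, embedded by `j`, and the cyclic group generated by `ζ`,
where `⟨ζ⟩ ∩ j(H)` is generated by `j n = ζ ^ m`. -/
structure IsCyclicCentralProduct {H G : Type*} [Group H] [Group G] (j : H →* G) (ζ : G) (n : H)
    (m : ℕ) : Prop where
  injective : Function.Injective j
  commute : ∀ g, Commute ζ g
  exists_eq_zpow_mul : ∀ g, ∃ (k : ℤ) (h : H), g = ζ ^ k * j h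
  map_eq_pow : j n = ζ ^ m
  dvd_of_zpow_eq : ∀ (k : ℤ) (h : H), ζ ^ k = j h → (m : ℤ) ∣ k

variable {A H G : Type*} [CommGroup A] [Group H] [Group G] {j : H →* G} {ζ : G} {n : H} {m : ℕ}

namespace IsCyclicCentralProduct

variable (hG : IsCyclicCentralProduct j ζ n m)
include hG

theorem hom_ext {f f' : G →* A} (hζ : f ζ = f' ζ) (hj : ∀ h, f (j h) = f' (j h)) : f = f' := by
  ext g
  obtain ⟨k, h, rfl⟩ := hG.exists_eq_zpow_mul g
  rw [map_mul, map_mul, map_zpow, map_zpow, hζ, hj]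

theorem exists_hom (f : H →* A) {a : A} (ha : f n = a ^ m) :
    ∃ F : G →* A, F ζ = a ∧ ∀ h, F (j h) = f h := by
  let π : Multiplicative ℤ × H →* G :=
    (zpowersHom G ζ).noncommCoprod j fun k h => (hG.commute (j h)).zpow_left k.toAdd
  have hπ : Function.Surjective π := fun g => by
    obtain ⟨k, h, rfl⟩ := hG.exists_eq_zpow_mul g
    exact ⟨(Multiplicative.ofAdd k, h), rfl⟩
  let φ : Multiplicative ℤ × H →* A := (zpowersHom A a).coprod f
  have hker : π.ker ≤ φ.ker := by
    rintro ⟨k, h⟩ hkh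
    have hk : ζ ^ k.toAdd = j h⁻¹ := by
      rw [map_inv]
      exact eq_inv_of_mul_eq_one_left hkh
    obtain ⟨t, ht⟩ := hG.dvd_of_zpow_eq _ _ hk
    have hn : h⁻¹ = n ^ t := hG.injective <| by
      rw [← hk, ht, _root_.zpow_mul, zpow_natCast, map_zpow, hG.map_eq_pow]
    change a ^ k.toAdd * f h = 1
    rw [ht, _root_.zpow_mul, zpow_natCast, ← ha, ← map_zpow, ← hn, map_inv, inv_mul_cancel]
  let F := π.liftOfSurjective hπ ⟨φ, hker⟩
  have hF (k : ℤ) (h : H) : F (ζ ^ k * j h) = a ^ k * f h :=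
    MonoidHom.liftOfRightInverse_comp_apply _ _ _ ⟨φ, hker⟩ (Multiplicative.ofAdd k, h)
  exact ⟨F, by simpa using hF 1 1, fun h => by simpa using hF 0 h⟩

theorem twistedProduct {c : G → G → A} (hc : IsTwoCocycle c)
    (hswap : ∀ g, c ζ g = c g ζ) :
    IsCyclicCentralProduct (TwistedProduct.map hc j) ⟨1, ζ⟩
      ⟨((⟨1, ζ⟩ : TwistedProduct hc) ^ m).scalar, n⟩ m := by
  let t : TwistedProduct hc := ⟨1, ζ⟩
  have hbase (k : ℤ) : (t ^ k).base = ζ ^ k := map_zpow (TwistedProduct.extension hc).rightHom t k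
  refine ⟨fun x y h => ?_, fun e => ?_, fun e => ?_, ?_, fun k y hk => ?_⟩
  · obtain ⟨hs, hb⟩ := TwistedProduct.ext_iff.1 h
    exact TwistedProduct.ext hs (hG.injective hb)
  · exact TwistedProduct.commute_iff.2 ⟨hG.commute e.base, hswap e.base⟩
  · obtain ⟨k, h, hk⟩ := hG.exists_eq_zpow_mul e.base
    refine ⟨k, ⟨((t ^ k)⁻¹ * e).scalar, h⟩, eq_mul_of_inv_mul_eq ?_⟩
    refine TwistedProduct.ext rfl ?_
    change (t ^ k).base⁻¹ * e.base = j h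
    rw [hbase, hk, inv_mul_cancel_left]
  · refine TwistedProduct.ext rfl ?_
    change j n = (t ^ m).base
    rw [← zpow_natCast, hbase, zpow_natCast, hG.map_eq_pow]
  · exact hG.dvd_of_zpow_eq k y.base (by rw [← hbase, hk]; rfl)

theorem isTwoCoboundary_of_swapCharacter_eq_one [RootableBy A ℕ] (hm : m ≠ 0) {c : G → G → A}
    (hc : IsTwoCocycle c) (hH : IsTwoCoboundary fun x y => c (j x) (j y))
    (hswap : hc.swapCharacter hG.commute = 1) : IsTwoCoboundary c := by
  obtain ⟨r, hr⟩ := (TwistedProduct.isTwoCoboundary_iff_hasRetraction (hc.comp j)).1 hH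
  have hE := hG.twistedProduct hc fun g => (div_eq_one.1 (DFunLike.congr_fun hswap g)).symm
  obtain ⟨R, -, hR⟩ := hE.exists_hom r (RootableBy.root_cancel _ hm).symm
  refine (TwistedProduct.isTwoCoboundary_iff_hasRetraction hc).2 ⟨R, fun a => ?_⟩
  rw [← TwistedProduct.map_inl hc j, hR, hr]

end IsCyclicCentralProduct

/-- The characters of order dividing `m` that are trivial on `n`. -/
def torsionCharacters (A : Type*) [CommGroup A] (n : H) (m : ℕ) : Subgroup (H →* A) :=
  (powMonoidHom m).ker ⊓ (MonoidHom.eval n).ker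

theorem mem_torsionCharacters {χ : H →* A} :
    χ ∈ torsionCharacters A n m ↔ χ ^ m = 1 ∧ χ n = 1 :=
  Iff.rfl

namespace IsCyclicCentralProduct

variable (hG : IsCyclicCentralProduct j ζ n m) {c : G → G → A} (hc : IsTwoCocycle c)

theorem swapCharacter_comp_mem_torsionCharacters
    (hH : IsTwoCoboundary fun x y => c (j x) (j y)) :
    (hc.swapCharacter hG.commute).comp j ∈ torsionCharacters A n m := by
  refine mem_torsionCharacters.2 ⟨MonoidHom.ext fun h => ?_, ?_⟩
  · have hnh : Commute n h := .of_map hG.injective <| by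
      rw [hG.map_eq_pow]
      exact (hG.commute (j h)).pow_left m
    have hsymm : c (ζ ^ m) (j h) = c (j h) (ζ ^ m) := by
      rw [← hG.map_eq_pow]
      exact hH.eq_swap hnh
    change (c (j h) ζ / c ζ (j h)) ^ m = 1
    rw [← inv_div, inv_pow, ← hc.div_swap_pow (hG.commute (j h)), hsymm, div_self', inv_one]
  · change c (j n) ζ / c ζ (j n) = 1
    rw [hG.map_eq_pow, hc.div_swap_pow (hG.commute ζ), div_self', one_pow]

include hG

theorem swapCharacter_eq_one_iff :
    hc.swapCharacter hG.commute = 1 ↔ (hc.swapCharacter hG.commute).comp j = 1 := by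
  refine ⟨fun h => by rw [h, MonoidHom.one_comp], fun h => hG.hom_ext ?_ (DFunLike.congr_fun h)⟩
  exact div_self' _

theorem exists_isTwoCocycle_swapCharacter_comp_eq {χ : H →* A} (hχ : χ ∈ torsionCharacters A n m) :
    ∃ (c : G → G → A) (hc : IsTwoCocycle c), (hc.swapCharacter hG.commute).comp j = χ := by
  obtain ⟨hχm, hχn⟩ := mem_torsionCharacters.1 hχ
  obtain ⟨ψ, hψζ, hψ⟩ := hG.exists_hom χ (a := 1) (by rw [hχn, one_pow])
  have hψm : ψ ^ m = 1 := hG.hom_ext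
    (by rw [MonoidHom.pow_apply, hψζ, one_pow, MonoidHom.one_apply])
    fun h => by rw [MonoidHom.pow_apply, hψ]; exact DFunLike.congr_fun hχm h
  obtain ⟨B, hBζ, hB⟩ := hG.exists_hom (1 : H →* G →* A) (a := ψ) hψm.symm
  refine ⟨_, isTwoCocycle_bilinear B, MonoidHom.ext fun h => ?_⟩
  change B ζ (j h) / B (j h) ζ = χ h
  rw [hBζ, hB, hψ, MonoidHom.one_apply, MonoidHom.one_apply, div_one]

end IsCyclicCentralProduct

end CyclicCentralProduct

section SecondCohomology

universe u

open groupCohomology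

theorem nonempty_H2_addEquiv {k G : Type u} [CommRing k] [Group G] (M : Rep.{u} k G)
    {B : Type*} [AddCommGroup B] (Φ : cocycles₂ M →+ B) (hsurj : Function.Surjective Φ)
    (hker : ∀ f, Φ f = 0 ↔ ⇑f ∈ coboundaries₂ M) : Nonempty (groupCohomology M 2 ≃+ B) := by
  let q : cocycles₂ M →+ groupCohomology M 2 := (H2π M).hom.toAddMonoidHom
  have hq : Function.Surjective q := (ModuleCat.epi_iff_surjective (H2π M)).1 inferInstance
  have hqker : q.ker = Φ.ker := by
    ext f
    rw [AddMonoidHom.mem_ker, AddMonoidHom.mem_ker, hker]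
    exact H2π_eq_zero_iff f
  exact ⟨(QuotientAddGroup.quotientKerEquivOfSurjective q hq).symm.trans
    ((QuotientAddGroup.quotientAddEquivOfEq hqker).trans
      (QuotientAddGroup.quotientKerEquivOfSurjective Φ hsurj))⟩

variable {A G H : Type} [CommGroup A] [Group G] [Group H]

/-- The multiplicative function of two variables underlying an additive 2-cocycle. -/
def mulCochain (f : cocycles₂ (Rep.trivial ℤ G (Additive A))) : G → G → A :=
  fun g h => Additive.toMul (show Additive A from f (g, h))

theorem isTwoCocycle_mulCochain (f : cocycles₂ (Rep.trivial ℤ G (Additive A))) :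
    IsTwoCocycle (mulCochain f) :=
  (mem_cocycles₂_iff f.1).1 f.2

theorem IsTwoCocycle.exists_mulCochain_eq {c : G → G → A} (hc : IsTwoCocycle c) :
    ∃ f : cocycles₂ (Rep.trivial ℤ G (Additive A)), mulCochain f = c :=
  ⟨⟨fun p => Additive.ofMul (c p.1 p.2),
    (mem_cocycles₂_iff (A := Rep.trivial ℤ G (Additive A)) _).2 hc⟩, rfl⟩

theorem mem_coboundaries₂_iff_isTwoCoboundary
    (f : cocycles₂ (Rep.trivial ℤ G (Additive A))) :
    ⇑f ∈ coboundaries₂ (Rep.trivial ℤ G (Additive A)) ↔ IsTwoCoboundary (mulCochain f) := by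
  constructor
  · rintro ⟨b, hb⟩
    refine ⟨fun g => Additive.toMul (show Additive A from b g), fun g h => ?_⟩
    have hfb : b h - b (g * h) + b g = f (g, h) := congrFun hb (g, h)
    have hsum : f (g, h) + b (g * h) = b g + b h := by rw [← hfb]; abel
    exact hsum
  · rintro ⟨b, hb⟩
    refine ⟨fun g => Additive.ofMul (b g), funext fun ⟨g, h⟩ => ?_⟩
    have hfb : b h / b (g * h) * b g = mulCochain f g h := by
      rw [div_mul_eq_mul_div, div_eq_iff_eq_mul, hb, mul_comm]
    exact hfb

theorem subsingleton_H2_iff :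
    Subsingleton (groupCohomology (Rep.trivial ℤ G (Additive A)) 2) ↔
      ∀ c : G → G → A, IsTwoCocycle c → IsTwoCoboundary c := by
  have hsurj : Function.Surjective (H2π (Rep.trivial ℤ G (Additive A))) :=
    (ModuleCat.epi_iff_surjective _).1 inferInstance
  constructor
  · rintro _ c hc
    obtain ⟨f, rfl⟩ := hc.exists_mulCochain_eq
    rw [← mem_coboundaries₂_iff_isTwoCoboundary, ← H2π_eq_zero_iff]
    exact Subsingleton.elim _ _
  · refine fun h => subsingleton_of_forall_eq 0 fun x => ?_
    obtain ⟨f, rfl⟩ := hsurj x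
    rw [H2π_eq_zero_iff, mem_coboundaries₂_iff_isTwoCoboundary]
    exact h _ (isTwoCocycle_mulCochain f)

theorem subsingleton_H2_of_det_eq_one [RootableBy A ℕ] [Finite G] {K V : Type*} [Field K]
    [IsAlgClosed K] [CharZero K] [AddCommGroup V] [Module K V]
    (hV : Module.finrank K V = 2) {ρ : Representation K G V} (hρ : Function.Injective ρ)
    (hdet : ∀ g, LinearMap.det (ρ g) = 1) :
    Subsingleton (groupCohomology (Rep.trivial ℤ G (Additive A)) 2) :=
  subsingleton_H2_iff.2 fun _ hc => (TwistedProduct.isTwoCoboundary_iff_hasRetraction hc).2 <|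
    hasRetraction_of_det_eq_one hV hρ hdet (TwistedProduct.isCentralExtension hc)

theorem IsCyclicCentralProduct.nonempty_H2_addEquiv_torsionCharacters [RootableBy A ℕ]
    {j : H →* G} {ζ : G} {n : H} {m : ℕ} (hG : IsCyclicCentralProduct j ζ n m) (hm : m ≠ 0)
    (hH : Subsingleton (groupCohomology (Rep.trivial ℤ H (Additive A)) 2)) :
    Nonempty (groupCohomology (Rep.trivial ℤ G (Additive A)) 2 ≃+
      Additive (torsionCharacters A n m)) := by
  have hres {c : G → G → A} (hc : IsTwoCocycle c) : IsTwoCoboundary fun x y => c (j x) (j y) :=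
    subsingleton_H2_iff.1 hH _ (hc.comp j)
  let χ (f : cocycles₂ (Rep.trivial ℤ G (Additive A))) : H →* A :=
    ((isTwoCocycle_mulCochain f).swapCharacter hG.commute).comp j
  let Φ : cocycles₂ (Rep.trivial ℤ G (Additive A)) →+ Additive (torsionCharacters A n m) :=
    AddMonoidHom.mk'
      (fun f => Additive.ofMul ⟨χ f, hG.swapCharacter_comp_mem_torsionCharacters
        (isTwoCocycle_mulCochain f) (hres (isTwoCocycle_mulCochain f))⟩) fun f f' =>
        Additive.toMul.injective <| Subtype.ext <| MonoidHom.ext fun h =>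
          mul_div_mul_comm (mulCochain f (j h) ζ) (mulCochain f' (j h) ζ) (mulCochain f ζ (j h))
            (mulCochain f' ζ (j h))
  have hΦ (f) (ψ : torsionCharacters A n m) : Φ f = Additive.ofMul ψ ↔ χ f = ψ :=
    Additive.ofMul.apply_eq_iff_eq.trans Subtype.ext_iff
  refine nonempty_H2_addEquiv _ Φ (Additive.ofMul.surjective.forall.2 fun ψ => ?_) fun f => ?_
  · obtain ⟨c, hc, hcψ⟩ := hG.exists_isTwoCocycle_swapCharacter_comp_eq ψ.2
    obtain ⟨f, rfl⟩ := hc.exists_mulCochain_eq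
    exact ⟨f, (hΦ f ψ).2 hcψ⟩
  · have hf := isTwoCocycle_mulCochain f
    rw [mem_coboundaries₂_iff_isTwoCoboundary]
    refine (hΦ f 1).trans ⟨fun h => ?_, fun h => MonoidHom.ext fun x => ?_⟩
    · exact hG.isTwoCoboundary_of_swapCharacter_eq_one hm hf (hres hf)
        ((hG.swapCharacter_eq_one_iff hf).2 h)
    · exact div_eq_one.2 (h.eq_swap (hG.commute (j x)).symm)

end SecondCohomology

section ScalarExtension

theorem scalarGL_commute (z : ℂˣ) (g : GL (Fin 2) ℂ) : Commute (scalarGL z) g :=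
  Units.ext (Algebra.commutes (z : ℂ) (g : Matrix (Fin 2) (Fin 2) ℂ))

theorem scalarGL_pow (z : ℂˣ) (k : ℕ) : scalarGL z ^ k = scalarGL (z ^ k) :=
  (map_pow (Units.map _) z k).symm

theorem det_scalarGL (z : ℂˣ) : Matrix.GeneralLinearGroup.det (scalarGL z) = z ^ 2 :=
  Units.ext <| by simp [scalarGL, Matrix.algebraMap_eq_diagonal, sq]

theorem coe_scalarGL_neg_one :
    ((scalarGL (-1) : GL (Fin 2) ℂ) : Matrix (Fin 2) (Fin 2) ℂ) = -1 := by
  simp [scalarGL]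

theorem le_muG (m : ℕ) (G₁ : Subgroup (GL (Fin 2) ℂ)) : G₁ ≤ muG m G₁ :=
  fun _ hg => Subgroup.subset_closure (Or.inr hg)

variable {m : ℕ} {G₁ : Subgroup (GL (Fin 2) ℂ)}

theorem exists_eq_zpow_mul_of_mem_muG (hm : m ≠ 0) {z : ℂˣ} (hz : IsPrimitiveRoot z (2 * m))
    {g : GL (Fin 2) ℂ} (hg : g ∈ muG m G₁) :
    ∃ (k : ℤ), ∃ h ∈ G₁, g = scalarGL z ^ k * h := by
  induction hg using Subgroup.closure_induction with
  | mem g hg =>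
    obtain ⟨w, hw, rfl⟩ | hg := hg
    · have : NeZero (2 * m) := ⟨mul_ne_zero two_ne_zero hm⟩
      obtain ⟨i, -, rfl⟩ := hz.eq_pow_of_mem_rootsOfUnity ((mem_rootsOfUnity _ _).2 hw)
      exact ⟨i, 1, one_mem _, by rw [zpow_natCast, mul_one, scalarGL_pow]⟩
    · exact ⟨0, g, hg, by rw [zpow_zero, one_mul]⟩
  | one => exact ⟨0, 1, one_mem _, by rw [zpow_zero, one_mul]⟩
  | mul _ _ _ _ hx hy =>
    obtain ⟨k, x, hx, rfl⟩ := hx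
    obtain ⟨l, y, hy, rfl⟩ := hy
    exact ⟨k + l, x * y, mul_mem hx hy, by
      rw [_root_.zpow_add, ((scalarGL_commute z x).zpow_left l).symm.mul_mul_mul_comm]⟩
  | inv _ _ hx =>
    obtain ⟨k, x, hx, rfl⟩ := hx
    exact ⟨-k, x⁻¹, inv_mem hx, by
      rw [((scalarGL_commute z x).zpow_left k).eq, _root_.mul_inv_rev, _root_.zpow_neg]⟩

variable (hSL : ∀ g ∈ G₁, Matrix.GeneralLinearGroup.det g = 1)
include hSL

theorem dvd_of_scalarGL_zpow_mem {z : ℂˣ} (hz : IsPrimitiveRoot z (2 * m)) {k : ℤ}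
    (hk : scalarGL z ^ k ∈ G₁) : (m : ℤ) ∣ k := by
  have hdet : z ^ (2 * k) = 1 := by
    rw [_root_.zpow_mul, zpow_ofNat, ← det_scalarGL, ← map_zpow, hSL _ hk]
  rw [hz.zpow_eq_one_iff_dvd, Nat.cast_mul, Nat.cast_ofNat] at hdet
  exact Int.dvd_of_mul_dvd_mul_left two_ne_zero hdet

theorem exists_isCyclicCentralProduct_muG (hm : m ≠ 0) {negI : G₁}
    (hneg : ((negI : GL (Fin 2) ℂ) : Matrix (Fin 2) (Fin 2) ℂ) = -1) :
    ∃ ζ, IsCyclicCentralProduct (Subgroup.inclusion (le_muG m G₁)) ζ negI m := by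
  have hm2 : 2 * m ≠ 0 := mul_ne_zero two_ne_zero hm
  have hw := Complex.isPrimitiveRoot_exp (2 * m) hm2
  obtain ⟨z, hzw⟩ := hw.isUnit hm2
  rw [← hzw] at hw
  have hz : IsPrimitiveRoot z (2 * m) := IsPrimitiveRoot.coe_units_iff.1 hw
  have hzm : z ^ m = -1 :=
    Units.ext (hw.pow (Nat.pos_of_ne_zero hm2) (mul_comm 2 m)).eq_neg_one_of_two_right
  have hmem : scalarGL z ∈ muG m G₁ := Subgroup.subset_closure (Or.inl ⟨z, hz.pow_eq_one, rfl⟩)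
  refine ⟨⟨scalarGL z, hmem⟩, Subgroup.inclusion_injective _,
    fun g => Subtype.ext (scalarGL_commute z g.1), fun g => ?_, ?_, fun k h hk => ?_⟩
  · obtain ⟨k, h, hh, hg⟩ := exists_eq_zpow_mul_of_mem_muG hm hz g.2
    exact ⟨k, ⟨h, hh⟩, Subtype.ext hg⟩
  · have hpow : scalarGL z ^ m = negI := Units.ext <| by
      rw [scalarGL_pow, hzm, coe_scalarGL_neg_one, hneg]
    exact Subtype.ext hpow.symm
  · have hkh : scalarGL z ^ k = h := congrArg Subtype.val hk
    exact dvd_of_scalarGL_zpow_mem hSL hz (hkh ▸ h.2)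

theorem subsingleton_H2_of_forall_mem_det_eq_one [Finite G₁] :
    Subsingleton (groupCohomology (Rep.trivial ℤ G₁ (Additive ℂˣ)) 2) := by
  let ρ : Representation ℂ G₁ (Fin 2 → ℂ) :=
    (Matrix.toLinAlgEquiv' : Matrix (Fin 2) (Fin 2) ℂ ≃ₐ[ℂ] _).toAlgHom.toMonoidHom.comp
      ((Units.coeHom _).comp G₁.subtype)
  refine subsingleton_H2_of_det_eq_one (ρ := ρ) (Module.finrank_fin_fun ℂ)
    (Matrix.toLinAlgEquiv'.injective.comp (Units.val_injective.comp Subtype.val_injective)) ?_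
  exact fun g => (LinearMap.det_toLin' _).trans (congrArg Units.val (hSL g g.2))

end ScalarExtension

/-- Let `G₁ ⊆ SL₂(ℂ)` be a finite subgroup containing `-I`, `m ≥ 1`, and
`G = μ_{2m}·G₁ ⊆ GL₂(ℂ)`. Then `H²(G, ℂ*)` is isomorphic to
`Hom(μ_m, (G₁/⟨-I⟩)^∨)`, the group of characters of `G₁` of order dividing `m`
which are trivial on `-I`. -/
theorem stmt18 (m : ℕ) (hm : 0 < m) (G₁ : Subgroup (GL (Fin 2) ℂ)) [Finite G₁]
    (hSL : ∀ g ∈ G₁, Matrix.GeneralLinearGroup.det g = 1)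
    (negI : ↥G₁) (hneg : ((negI : GL (Fin 2) ℂ) : Matrix (Fin 2) (Fin 2) ℂ) = -1) :
    Nonempty ((groupCohomology
        (Rep.trivial ℤ ↥(muG m G₁) (Additive ℂˣ)) 2) ≃+
      Additive ↥(charSubgroup G₁ m negI)) := by
  obtain ⟨ζ, hG⟩ := exists_isCyclicCentralProduct_muG hSL hm.ne' hneg
  have hH2 := subsingleton_H2_of_forall_mem_det_eq_one hSL
  exact hG.nonempty_H2_addEquiv_torsionCharacters hm.ne' hH2
end
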